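/- Let q be a prime power and n a positive integer. If q^{n/2 − 2} > 2^{ω(q^n − 1) + 2}, then for every a, b in F_q there exists a nonzero element ξ in F_{q^n} such that Tr(ξ) = a, Tr(ξ^{-1}) = b, and ξ + ξ^{-1} is a primitive element of F_{q^n}. -/

import Mathlib

/-!
The heart of the matter is a Weil bound `‖∑ χ (x + x⁻¹) ψ (u x + v x⁻¹)‖ ≤ 4 √|E|`, the sum being
over the nonzero `x` of a finite field `E`. Lift the sum to the extensions `K` of `E`. When the
degree is even, Stepanov's method in Bombieri's form bounds the number of points of the curve
`t ^ d = x + 1 / x`, `s ^ Q - s = u x + v / x` with a prescribed Frobenius: counting dimensions of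
spaces of functions with bounded poles at infinity yields a nonzero function which vanishes at all
these points and has few poles. This gives a bound `C √|K|` with a poor constant `C`. On the other
hand the `L`-function of the sums is a polynomial of degree at most `4`, so by Newton's identities
the lifted sums are the negatives of the power sums of at most four complex numbers. Powers of these
numbers return arbitrarily close to the positive real axis together, so the bound with a poor
constant forces each of them to have modulus at most `√|E|`.

Given the bound, orthogonality of additive characters detects the two traces, and
inclusion-exclusion over the primes dividing `|E| - 1`, with multiplicative characters of those
orders, detects the primitive elements. The trivial characters contribute about `|E|`, all others
together at most `4 q ^ 2 2 ^ ω √|E|`.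
-/

open Finsupp (linearCombination)

lemma algHom_linearCombination {K R S J : Type*} [CommSemiring K] [Semiring R] [Semiring S]
    [Algebra K R] [Algebra K S] (f : R →ₐ[K] S) (e : J → R) (c : J →₀ K) :
    f (linearCombination K e c) = linearCombination K (f ∘ e) c :=
  Finsupp.apply_linearCombination K f.toLinearMap e c

section PoleOrders

variable {K L Γ J : Type*} [Field K] [Field L] [Algebra K L] [LinearOrderedCommGroupWithZero Γ]

/-- A family `e` of functions whose pole orders `wt` at the place `V`, measured in units of
`γ ^ (1 / D)`, are pairwise distinct. The value group need not contain roots of `γ`, so the orders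
are recorded through `D`-th powers. -/
structure HasPoleOrders (K : Type*) {L Γ J : Type*} [Field K] [Field L] [Algebra K L]
    [LinearOrderedCommGroupWithZero Γ] (V : Valuation L Γ) (D : ℕ) (γ : Γ) (e : J → L)
    (wt : J → ℕ) : Prop where
  one_lt : 1 < γ
  ne_zero : D ≠ 0
  valuation_algebraMap : ∀ c : K, c ≠ 0 → V (algebraMap K L c) = 1
  valuation_pow : ∀ j, V (e j) ^ D = γ ^ wt j
  injective : Function.Injective wt

namespace HasPoleOrders

variable {V : Valuation L Γ} {D : ℕ} {γ : Γ} {e : J → L} {wt : J → ℕ}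

lemma valuation_smul_pow (h : HasPoleOrders K V D γ e wt) {c : K} (hc : c ≠ 0) (j : J) :
    V (c • e j) ^ D = γ ^ wt j := by
  rw [Algebra.smul_def, map_mul, h.valuation_algebraMap c hc, one_mul, h.valuation_pow]

lemma pow_le_valuation_linearCombination (h : HasPoleOrders K V D γ e wt) {c : J →₀ K} {j : J}
    (hj : c j ≠ 0) : γ ^ wt j ≤ V (linearCombination K e c) ^ D := by
  classical
  have mem_support {i : J} : i ∈ c.support ↔ c i ≠ 0 := Finsupp.mem_support_iff
  obtain ⟨m, hm, hmax⟩ := c.support.exists_max_image wt ⟨j, mem_support.2 hj⟩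
  have lt_leading : ∀ i ∈ c.support \ {m}, V (c i • e i) < V (c m • e m) := by
    intro i hi
    obtain ⟨hi, him⟩ := Finset.mem_sdiff.1 hi
    refine lt_of_pow_lt_pow_left₀ D zero_le ?_
    rw [h.valuation_smul_pow (mem_support.1 hi), h.valuation_smul_pow (mem_support.1 hm)]
    refine pow_lt_pow_right₀ h.one_lt ((hmax i hi).lt_of_ne fun hwt => him ?_)
    exact Finset.mem_singleton.2 (h.injective hwt)
  rw [Finsupp.linearCombination_apply, Finsupp.sum, Valuation.map_sum_eq_of_lt V hm lt_leading,
    h.valuation_smul_pow (mem_support.1 hm)]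
  exact pow_le_pow_right₀ h.one_lt.le (hmax j (mem_support.2 hj))

lemma valuation_linearCombination_le_iff (h : HasPoleOrders K V D γ e wt) (c : J →₀ K) (m : ℕ) :
    V (linearCombination K e c) ^ D ≤ γ ^ m ↔ ∀ j, c j ≠ 0 → wt j ≤ m := by
  refine ⟨fun hc j hj => (pow_le_pow_iff_right₀ h.one_lt).1
    ((h.pow_le_valuation_linearCombination hj).trans hc), fun hc => ?_⟩
  have term_le : ∀ j ∈ c.support, V (c j • e j) ^ D ≤ γ ^ m := fun j hj => by
    rw [h.valuation_smul_pow (Finsupp.mem_support_iff.1 hj)]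
    exact pow_le_pow_right₀ h.one_lt.le (hc j (Finsupp.mem_support_iff.1 hj))
  obtain hsupp | hsupp := c.support.eq_empty_or_nonempty
  · simp [Finsupp.support_eq_empty.1 hsupp, h.ne_zero]
  · obtain ⟨i, hi, hmax⟩ := c.support.exists_max_image (fun j => V (c j • e j)) hsupp
    exact (pow_le_pow_left₀ zero_le (V.map_sum_le hmax) D).trans (term_le i hi)

lemma linearIndependent (h : HasPoleOrders K V D γ e wt) : LinearIndependent K e := by
  refine linearIndependent_iff.2 fun c hc => Finsupp.ext fun j => of_not_not fun hj => ?_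
  have := h.pow_le_valuation_linearCombination hj
  rw [hc, map_zero, zero_pow h.ne_zero, le_zero_iff] at this
  exact pow_ne_zero _ (zero_lt_one.trans h.one_lt).ne' this

lemma mul_pow (h : HasPoleOrders K V D γ e wt) {I : Type*} (f g : I → J) (M : ℕ)
    (hinj : Function.Injective fun i => wt (f i) + wt (g i) * M) :
    HasPoleOrders K V D γ (fun i => e (f i) * e (g i) ^ M)
      (fun i => wt (f i) + wt (g i) * M) where
  one_lt := h.one_lt
  ne_zero := h.ne_zero
  valuation_algebraMap := h.valuation_algebraMap
  valuation_pow i := by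
    rw [map_mul, map_pow, _root_.mul_pow, pow_right_comm, h.valuation_pow, h.valuation_pow,
      ← pow_mul, pow_add]
  injective := hinj

end HasPoleOrders

end PoleOrders

section StepanovBombieri

variable {K L Γ J R : Type*} [Field K] [Field L] [Algebra K L] [LinearOrderedCommGroupWithZero Γ]
  [CommRing R] [Algebra K R] {V : Valuation L Γ} {D : ℕ} {γ : Γ} {ι : R →ₐ[K] L}
  {e : J → R} {wt : J → ℕ}

namespace HasPoleOrders

lemma mem_span_of_valuation_le (h : HasPoleOrders K V D γ (ι ∘ e) wt)
    (hspan : Submodule.span K (Set.range e) = ⊤) {m : ℕ} {b : R} (hb : V (ι b) ^ D ≤ γ ^ m) :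
    b ∈ Submodule.span K (e '' {j | wt j ≤ m}) := by
  obtain ⟨c, rfl⟩ := (Finsupp.mem_span_range_iff_exists_finsupp (R := K) (v := e) (x := b)).1
    (hspan ▸ Submodule.mem_top)
  rw [← Finsupp.linearCombination_apply, algHom_linearCombination,
    h.valuation_linearCombination_le_iff] at hb
  refine Submodule.sum_mem _ fun j hj => Submodule.smul_mem _ _ (Submodule.subset_span ?_)
  exact ⟨j, hb j (Finsupp.mem_support_iff.1 hj), rfl⟩

lemma exists_linear_relation (h : HasPoleOrders K V D γ (ι ∘ e) wt)
    (hspan : Submodule.span K (Set.range e) = ⊤) {m : ℕ} {I : Type*} [Fintype I] {b : I → R}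
    (hb : ∀ i, V (ι (b i)) ^ D ≤ γ ^ m) (hI : m + 1 < Fintype.card I) :
    ∃ g : I → K, ∑ i, g i • b i = 0 ∧ ∃ i, g i ≠ 0 := by
  classical
  rw [← Fintype.not_linearIndependent_iff]
  intro hindep
  have hinj : Set.InjOn wt {j | wt j ≤ m} := h.injective.injOn
  have hmaps : Set.MapsTo wt {j | wt j ≤ m} (Finset.range (m + 1)) := fun j hj => by
    simpa [Nat.lt_succ_iff] using hj
  have hfin : {j | wt j ≤ m}.Finite :=
    Set.Finite.of_injOn hmaps hinj (Finset.finite_toSet _)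
  have hcard : hfin.toFinset.card ≤ m + 1 := by
    simpa using Finset.card_le_card_of_injOn (t := Finset.range (m + 1)) wt
      (by simpa using hmaps) (by simpa using hinj)
  have hrange : Set.range b ≤ Submodule.span K (hfin.toFinset.image e : Set R) := by
    rintro _ ⟨i, rfl⟩
    simpa using h.mem_span_of_valuation_le hspan (hb i)
  have := linearIndependent_le_span' b hindep _ hrange
  simp only [Cardinal.mk_fintype, Nat.cast_le, Finset.coe_sort_coe, Fintype.card_coe] at this
  exact (this.trans (Finset.card_image_le.trans hcard)).not_gt hI

end HasPoleOrders

lemma injective_add_mul_of_lt {I : Type*} {f g : I → ℕ} {M : ℕ} (hf : ∀ i, f i < M)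
    (hfg : Function.Injective fun i => (f i, g i)) :
    Function.Injective fun i => f i + g i * M := by
  intro i j hij
  have hM : 0 < M := (hf i).pos
  have hmod := congrArg (· % M) hij
  simp only [Nat.add_mul_mod_self_right, Nat.mod_eq_of_lt (hf _)] at hmod
  simp only [hmod, add_right_inj] at hij
  exact hfg (Prod.ext hmod (Nat.eq_of_mul_eq_mul_right hM hij))

lemma sum_frobenius_twist_eq_zero {Ω I : Type*} [Fintype I] [Field Ω] [Algebra K Ω] {p r M : ℕ}
    [ExpChar Ω p] (hM : M = p ^ r) (hK : ∀ c : K, c ^ M ^ 2 = c) (P : R →ₐ[K] Ω)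
    {f g g' : I → R} (hP : ∀ i, P (g' i) = P (g i) ^ M ^ 2) {c : I → K}
    (hc : ∑ i, c i • (f i ^ M * g' i) = 0) :
    P (∑ i, c i ^ M • (f i * g i ^ M)) = 0 := by
  have hpow : P (∑ i, c i ^ M • (f i * g i ^ M)) ^ M = P (∑ i, c i • (f i ^ M * g' i)) := by
    simp only [map_sum, map_smul, map_mul, map_pow]
    rw [hM, sum_pow_char_pow, ← hM]
    refine Finset.sum_congr rfl fun i _ => ?_
    rw [hP, smul_pow, mul_pow, ← pow_mul, ← pow_mul, ← sq, hK]
  rw [hc, map_zero] at hpow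
  exact eq_zero_of_pow_eq_zero hpow

namespace HasPoleOrders

lemma exists_twisted_relation (h : HasPoleOrders K V D γ (ι ∘ e) wt)
    (hspan : Submodule.span K (Set.range e) = ⊤) {e' : J → R}
    (he' : ∀ j, V (ι (e' j)) ^ D ≤ γ ^ wt j) {κ M : ℕ} (hM : 2 * κ + 3 < M) {jm : ℕ → J}
    (hjm : ∀ m, wt (jm m) = κ + m) :
    ∃ g : Fin (M - κ) × Fin (M + 2 * κ + 2) → K,
      ∑ x, g x • (e (jm x.1) ^ M * e' (jm x.2)) = 0 ∧ ∃ x, g x ≠ 0 := by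
  refine h.exists_linear_relation hspan (m := (M - 1) * M + M + 3 * κ + 1) (fun x => ?_) ?_
  · have hx : (κ + x.1) * M ≤ (M - 1) * M := Nat.mul_le_mul_right _ (by omega)
    have hV := h.valuation_pow (jm x.1)
    rw [Function.comp_apply] at hV
    calc V (ι (e (jm x.1) ^ M * e' (jm x.2))) ^ D
        = γ ^ ((κ + x.1) * M) * V (ι (e' (jm x.2))) ^ D := by
          rw [map_mul, map_pow, map_mul, map_pow, _root_.mul_pow, pow_right_comm, hV, hjm,
            ← pow_mul]
      _ ≤ γ ^ ((κ + x.1) * M) * γ ^ wt (jm x.2) := mul_le_mul' le_rfl (he' _)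
      _ ≤ γ ^ ((M - 1) * M + M + 3 * κ + 1) := by
          rw [← pow_add, hjm]
          exact pow_le_pow_right₀ h.one_lt.le (by omega)
  · obtain ⟨t, rfl⟩ : ∃ t, M = 2 * κ + 4 + t := ⟨M - (2 * κ + 4), by omega⟩
    rw [Fintype.card_prod, Fintype.card_fin, Fintype.card_fin,
      show 2 * κ + 4 + t - κ = κ + 4 + t by omega,
      show 2 * κ + 4 + t - 1 = 2 * κ + 3 + t by omega]
    nlinarith

theorem exists_vanishing_linearCombination {Ω : Type*} [Field Ω] [Algebra K Ω] {p r M : ℕ}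
    [ExpChar Ω p] (hMp : M = p ^ r) (hK : ∀ c : K, c ^ M ^ 2 = c)
    (h : HasPoleOrders K V D γ (ι ∘ e) wt) (hspan : Submodule.span K (Set.range e) = ⊤)
    {e' : J → R} (he' : ∀ j, V (ι (e' j)) ^ D ≤ γ ^ wt j) {κ : ℕ}
    (hκ : ∀ m, κ ≤ m → ∃ j, wt j = m) (hM : 2 * κ + 3 < M) :
    ∃ c : J →₀ K, c ≠ 0 ∧ (∀ j, c j ≠ 0 → wt j ≤ M ^ 2 + (3 * κ + 3) * M) ∧
      ∀ P : R →ₐ[K] Ω, (∀ j, P (e' j) = P (e j) ^ M ^ 2) → P (linearCombination K e c) = 0 := by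
  choose jm hjm using fun m : ℕ => hκ (κ + m) (by omega)
  obtain ⟨g, hrel, x₀, hx₀⟩ := h.exists_twisted_relation hspan he' hM hjm
  let f := fun x : Fin (M - κ) × Fin (M + 2 * κ + 2) => e (jm x.1) * e (jm x.2) ^ M
  have hprod : HasPoleOrders K V D γ (ι ∘ f) fun x => wt (jm x.1) + wt (jm x.2) * M := by
    have := h.mul_pow (I := Fin (M - κ) × Fin (M + 2 * κ + 2)) (fun x => jm x.1)
      (fun x => jm x.2) M (injective_add_mul_of_lt (fun x => by rw [hjm]; omega) fun x y hxy => by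
        simp only [hjm, Prod.mk.injEq] at hxy
        ext <;> omega)
    convert this using 2 with x
    simp [f]
  let b : Fin (M - κ) × Fin (M + 2 * κ + 2) →₀ K :=
    (Finsupp.linearEquivFunOnFinite K K _).symm fun x => g x ^ M
  obtain ⟨c, hc⟩ : ∃ c, linearCombination K e c = linearCombination K f b := by
    rw [← LinearMap.mem_range, Finsupp.range_linearCombination, hspan]
    trivial
  refine ⟨c, ?_, ?_, fun P hP => ?_⟩
  · rintro rfl
    have hb : b = 0 := hprod.linearIndependent
      (by rw [← algHom_linearCombination, ← hc, map_zero, map_zero, map_zero])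
    exact pow_ne_zero M hx₀ (DFunLike.congr_fun hb x₀)
  · rw [← h.valuation_linearCombination_le_iff, ← algHom_linearCombination, hc,
      algHom_linearCombination, hprod.valuation_linearCombination_le_iff]
    intro x _
    have h₁ : wt (jm x.1) ≤ M := by rw [hjm]; omega
    have h₂ : wt (jm x.2) * M ≤ (M + 3 * κ + 1) * M := by
      gcongr
      rw [hjm]
      omega
    nlinarith
  · rw [hc, Finsupp.linearCombination_eq_fintype_linearCombination_apply K]
    exact sum_frobenius_twist_eq_zero hMp hK P (fun _ => hP _) hrel

end HasPoleOrders

end StepanovBombieri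

section Curve

variable {K A : Type*} [Field K] [CommRing A] [Algebra K A] {d Q : ℕ} {u v : K}

/-- The point `(x, y, w)` lies on the affine curve which in the coordinates `x`, `y / x` and
`z = w / x` is given by `(y / x) ^ d = x + x⁻¹` and `z ^ Q - z = u x + v x⁻¹`. Clearing denominators
makes `x`, `y`, `w` integral, with poles only at infinity. -/
structure IsCurvePoint (d Q : ℕ) (u v : K) (x y w : A) : Prop where
  pow_y : y ^ d = (x ^ 2 + 1) * x ^ (d - 1)
  pow_w : w ^ Q = x ^ (Q - 1) * w + algebraMap K A u * x ^ (Q + 1) +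
    algebraMap K A v * x ^ (Q - 1)

/-- The monomials `x ^ l * y ^ i * w ^ j` with `i < d` and `j < Q`, which span the coordinate ring
of the curve. -/
def curveMonomial (x y w : A) (j : ℕ × Fin d × Fin Q) : A :=
  x ^ j.1 * y ^ (j.2.1 : ℕ) * w ^ (j.2.2 : ℕ)

/-- The order of the pole of `curveMonomial x y w j` at infinity, where `x`, `y`, `w` have poles of
order `d * Q`, `Q * (d + 1)`, `d * (Q + 1)`. -/
def curveWeight (j : ℕ × Fin d × Fin Q) : ℕ :=
  d * Q * j.1 + Q * (d + 1) * j.2.1 + d * (Q + 1) * j.2.2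

lemma map_curveMonomial {B : Type*} [CommRing B] [Algebra K B] (f : A →ₐ[K] B) (x y w : A)
    (j : ℕ × Fin d × Fin Q) : f (curveMonomial x y w j) = curveMonomial (f x) (f y) (f w) j := by
  simp only [curveMonomial, map_mul, map_pow]

lemma curveMonomial_pow {x y w x' y' w' : A} {n : ℕ} (hx : x' = x ^ n) (hy : y' = y ^ n)
    (hw : w' = w ^ n) (j : ℕ × Fin d × Fin Q) :
    curveMonomial x' y' w' j = curveMonomial x y w j ^ n := by
  simp only [curveMonomial, hx, hy, hw, mul_pow, pow_right_comm _ n]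

lemma curveWeight_injective (hdQ : d.Coprime Q) :
    Function.Injective (curveWeight : ℕ × Fin d × Fin Q → ℕ) := by
  rintro ⟨l, ⟨i, hi⟩, ⟨j, hj⟩⟩ ⟨l', ⟨i', hi'⟩, ⟨j', hj'⟩⟩ h
  simp only [curveWeight] at h
  have hmodd : Q * i ≡ Q * i' [MOD d] := by
    have split (l i j : ℕ) : d * Q * l + Q * (d + 1) * i + d * (Q + 1) * j =
        Q * i + d * (Q * l + Q * i + (Q + 1) * j) := by ring
    rw [split, split] at h
    simpa [Nat.ModEq] using congrArg (· % d) h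
  obtain rfl : i = i' :=
    (Nat.ModEq.cancel_left_of_coprime hdQ hmodd).eq_of_lt_of_lt hi hi'
  have hmodQ : d * j ≡ d * j' [MOD Q] := by
    have split (l j : ℕ) : d * Q * l + Q * (d + 1) * i + d * (Q + 1) * j =
        d * j + Q * (d * l + (d + 1) * i + d * j) := by ring
    rw [split, split] at h
    simpa [Nat.ModEq] using congrArg (· % Q) h
  obtain rfl : j = j' :=
    (Nat.ModEq.cancel_left_of_coprime hdQ.symm hmodQ).eq_of_lt_of_lt hj hj'
  obtain rfl : l = l' := Nat.eq_of_mul_eq_mul_left (Nat.mul_pos hi.pos hj.pos) (by omega)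
  rfl

lemma exists_curveWeight_eq (hdQ : d.Coprime Q) (hd : d ≠ 0) (hQ : Q ≠ 0) {m : ℕ}
    (hm : Q * (d + 1) * d + d * (Q + 1) * Q ≤ m) :
    ∃ j : ℕ × Fin d × Fin Q, curveWeight j = m := by
  obtain ⟨i, hi, him⟩ := Nat.exists_mul_mod_eq_of_coprime m hdQ.symm hd
  obtain ⟨j, hj, hjm⟩ := Nat.exists_mul_mod_eq_of_coprime m hdQ hQ
  have hle : Q * (d + 1) * i + d * (Q + 1) * j ≤ m := le_trans (by gcongr) hm
  have hmodd : Q * (d + 1) * i + d * (Q + 1) * j ≡ m [MOD d] := by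
    rw [show Q * (d + 1) * i + d * (Q + 1) * j = Q * i + d * (Q * i + (Q + 1) * j) by ring]
    simpa [Nat.ModEq] using him
  have hmodQ : Q * (d + 1) * i + d * (Q + 1) * j ≡ m [MOD Q] := by
    rw [show Q * (d + 1) * i + d * (Q + 1) * j = d * j + Q * ((d + 1) * i + d * j) by ring]
    simpa [Nat.ModEq] using hjm
  obtain ⟨l, hl⟩ := (Nat.modEq_iff_dvd' hle).1
    ((Nat.modEq_and_modEq_iff_modEq_mul hdQ).1 ⟨hmodd, hmodQ⟩)
  refine ⟨(l, ⟨i, hi⟩, ⟨j, hj⟩), ?_⟩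
  simp only [curveWeight]
  omega

section Span

variable {x y w : A}

lemma mem_span_curveMonomial (l : ℕ) {i j : ℕ} (hi : i < d) (hj : j < Q) :
    x ^ l * y ^ i * w ^ j ∈ Submodule.span K (Set.range (curveMonomial (d := d) (Q := Q) x y w)) :=
  Submodule.subset_span ⟨(l, ⟨i, hi⟩, ⟨j, hj⟩), rfl⟩

lemma mul_mem_span_of_forall_mul_mem {J : Type*} {e : J → A} {a t : A}
    (ha : ∀ j, e j * a ∈ Submodule.span K (Set.range e))
    (ht : t ∈ Submodule.span K (Set.range e)) : t * a ∈ Submodule.span K (Set.range e) := by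
  have : Submodule.span K (Set.range e) ≤
      (Submodule.span K (Set.range e)).comap (LinearMap.mulRight K a) :=
    Submodule.span_le.2 (by rintro _ ⟨j, rfl⟩; exact ha j)
  exact this ht

lemma curveMonomial_mul_x_mem_span (j : ℕ × Fin d × Fin Q) :
    curveMonomial x y w j * x ∈
      Submodule.span K (Set.range (curveMonomial (d := d) (Q := Q) x y w)) := by
  convert! mem_span_curveMonomial (K := K) (x := x) (y := y) (w := w) (j.1 + 1) j.2.1.2 j.2.2.2
    using 1
  rw [curveMonomial]
  ring

lemma IsCurvePoint.curveMonomial_mul_y_mem_span (h : IsCurvePoint d Q u v x y w)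
    (j : ℕ × Fin d × Fin Q) : curveMonomial x y w j * y ∈
      Submodule.span K (Set.range (curveMonomial (d := d) (Q := Q) x y w)) := by
  obtain ⟨l, ⟨i, hi⟩, j, hj⟩ := j
  simp only [curveMonomial]
  obtain hid | rfl : i + 1 < d ∨ i + 1 = d := by omega
  · convert! mem_span_curveMonomial (K := K) (x := x) (y := y) (w := w) l hid hj using 1
    ring
  · have hreduce : x ^ l * y ^ i * w ^ j * y =
        x ^ (l + i + 2) * y ^ 0 * w ^ j + x ^ (l + i) * y ^ 0 * w ^ j := by
      have hy := h.pow_y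
      rw [Nat.add_sub_cancel] at hy
      linear_combination x ^ l * w ^ j * hy
    rw [hreduce]
    exact add_mem (mem_span_curveMonomial _ i.succ_pos hj) (mem_span_curveMonomial _ i.succ_pos hj)

lemma IsCurvePoint.curveMonomial_mul_w_mem_span (hQ : 1 < Q) (h : IsCurvePoint d Q u v x y w)
    (j : ℕ × Fin d × Fin Q) : curveMonomial x y w j * w ∈
      Submodule.span K (Set.range (curveMonomial (d := d) (Q := Q) x y w)) := by
  obtain ⟨l, ⟨i, hi⟩, j, hj⟩ := j
  simp only [curveMonomial]
  obtain hjQ | rfl : j + 1 < Q ∨ j + 1 = Q := by omega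
  · convert! mem_span_curveMonomial (K := K) (x := x) (y := y) (w := w) l hi hjQ using 1
    ring
  · have hreduce : x ^ l * y ^ i * w ^ j * w = x ^ (l + j) * y ^ i * w ^ 1 +
        u • (x ^ (l + j + 2) * y ^ i * w ^ 0) + v • (x ^ (l + j) * y ^ i * w ^ 0) := by
      have hw := h.pow_w
      rw [Nat.add_sub_cancel] at hw
      rw [Algebra.smul_def, Algebra.smul_def]
      linear_combination x ^ l * y ^ i * hw
    rw [hreduce]
    exact add_mem (add_mem (mem_span_curveMonomial _ hi hQ)
      (Submodule.smul_mem _ _ (mem_span_curveMonomial _ hi hj.pos)))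
      (Submodule.smul_mem _ _ (mem_span_curveMonomial _ hi hj.pos))

end Span

section CurveRing

open MvPolynomial

/-- The ideal of the curve of `IsCurvePoint`. -/
noncomputable def curveIdeal (d Q : ℕ) (u v : K) : Ideal (MvPolynomial (Fin 3) K) :=
  Ideal.span {X 1 ^ d - (X 0 ^ 2 + 1) * X 0 ^ (d - 1),
    X 2 ^ Q - (X 0 ^ (Q - 1) * X 2 + C u * X 0 ^ (Q + 1) + C v * X 0 ^ (Q - 1))}

/-- The coordinate ring of the curve of `IsCurvePoint`. -/
abbrev CurveRing (d Q : ℕ) (u v : K) : Type _ := MvPolynomial (Fin 3) K ⧸ curveIdeal d Q u v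

namespace CurveRing

/-- The coordinate functions `x`, `y`, `w` on the curve. -/
noncomputable def coord (d Q : ℕ) (u v : K) (k : Fin 3) : CurveRing d Q u v :=
  Ideal.Quotient.mk _ (X k)

/-- The monomials in the coordinate functions. -/
noncomputable def monomial (d Q : ℕ) (u v : K) : ℕ × Fin d × Fin Q → CurveRing d Q u v :=
  curveMonomial (coord d Q u v 0) (coord d Q u v 1) (coord d Q u v 2)

lemma isCurvePoint_coord (d Q : ℕ) (u v : K) :
    IsCurvePoint d Q u v (coord d Q u v 0) (coord d Q u v 1) (coord d Q u v 2) where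
  pow_y := Ideal.Quotient.eq.2 (Ideal.subset_span (by simp))
  pow_w := Ideal.Quotient.eq.2 (Ideal.subset_span (by simp))

/-- Evaluation of functions on the curve at a point. -/
noncomputable def eval {x y w : A} (h : IsCurvePoint d Q u v x y w) : CurveRing d Q u v →ₐ[K] A :=
  Ideal.Quotient.liftₐ _ (aeval ![x, y, w]) fun a ha => by
    have hle : curveIdeal d Q u v ≤ RingHom.ker (aeval (R := K) ![x, y, w]) :=
      Ideal.span_le.2 (by rintro a (rfl | rfl) <;> simp [RingHom.mem_ker, h.pow_y, h.pow_w])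
    exact hle ha

lemma eval_coord {x y w : A} (h : IsCurvePoint d Q u v x y w) (k : Fin 3) :
    eval h (coord d Q u v k) = ![x, y, w] k :=
  aeval_X _ k

lemma eval_monomial {x y w : A} (h : IsCurvePoint d Q u v x y w) (j : ℕ × Fin d × Fin Q) :
    eval h (monomial d Q u v j) = curveMonomial x y w j := by
  simp [monomial, map_curveMonomial, eval_coord]

lemma span_monomial (hd : d ≠ 0) (hQ : 1 < Q) :
    Submodule.span K (Set.range (monomial d Q u v)) = ⊤ := by
  refine Submodule.eq_top_iff'.2 fun b => ?_
  obtain ⟨b, rfl⟩ := Ideal.Quotient.mk_surjective b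
  have h := isCurvePoint_coord d Q u v
  induction b using MvPolynomial.induction_on with
  | C a =>
    have h1 : (1 : CurveRing d Q u v) ∈ Submodule.span K (Set.range (monomial d Q u v)) := by
      simpa only [pow_zero, mul_one, monomial] using mem_span_curveMonomial (K := K)
        (x := coord d Q u v 0) (y := coord d Q u v 1) (w := coord d Q u v 2) 0
        (Nat.pos_of_ne_zero hd) (zero_lt_one.trans hQ)
    have : Ideal.Quotient.mk (curveIdeal d Q u v) (C a) = a • 1 :=
      Algebra.algebraMap_eq_smul_one (A := CurveRing d Q u v) a
    exact this ▸ Submodule.smul_mem _ a h1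
  | add p q hp hq => rw [map_add]; exact add_mem hp hq
  | mul_X p k hp =>
    rw [map_mul]
    refine mul_mem_span_of_forall_mul_mem (fun j => ?_) hp
    fin_cases k
    exacts [curveMonomial_mul_x_mem_span j, h.curveMonomial_mul_y_mem_span j,
      h.curveMonomial_mul_w_mem_span hQ j]

end CurveRing

end CurveRing

end Curve

section PlaceAtInfinity

variable {K L Γ : Type*} [Field K] [Field L] [Algebra K L] [LinearOrderedCommGroupWithZero Γ]
  {V : Valuation L Γ}

lemma valuation_algebraMap_le_one (hV : ∀ c : K, c ≠ 0 → V (algebraMap K L c) = 1) (c : K) :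
    V (algebraMap K L c) ≤ 1 := by
  obtain rfl | hc := eq_or_ne c 0
  · simp
  · exact (hV c hc).le

lemma exists_valuationSubring_of_transcendental {x : L} (hx : Transcendental K x) :
    ∃ A : ValuationSubring L, 1 < A.valuation x ∧
      ∀ c : K, c ≠ 0 → A.valuation (algebraMap K L c) = 1 := by
  have hx' : x ∉ (integralClosure K L).toSubring := fun h => hx (IsIntegral.isAlgebraic h)
  have : IsIntegrallyClosedIn (integralClosure K L).toSubring L :=
    inferInstanceAs (IsIntegrallyClosedIn (integralClosure K L) L)
  obtain ⟨A, hA, hxA⟩ := Subring.exists_le_valuationSubring_of_isIntegrallyClosedIn hx'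
  have hle (c : K) : A.valuation (algebraMap K L c) ≤ 1 :=
    (A.valuation_le_one_iff _).2 (hA ((integralClosure K L).algebraMap_mem c))
  refine ⟨A, lt_of_not_ge fun h => hxA ((A.valuation_le_one_iff x).1 h), fun c hc => ?_⟩
  refine (hle c).antisymm ?_
  have hinv := hle c⁻¹
  rw [map_inv₀, map_inv₀] at hinv
  exact (inv_le_one₀ (zero_lt_iff.2 (by simpa using hc))).1 hinv

open Polynomial in
lemma exists_pow_sub_self_eq [IsAlgClosed L] {Q : ℕ} (hQ : 1 < Q) (a : L) :
    ∃ z : L, z ^ Q - z = a := by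
  have hdeg : (X ^ Q - (X + C a)).degree = (Q : WithBot ℕ) := by
    rw [degree_sub_eq_left_of_degree_lt, degree_X_pow]
    rw [degree_X_add_C, degree_X_pow]
    exact_mod_cast hQ
  obtain ⟨z, hz⟩ := IsAlgClosed.exists_root _ (hdeg.trans_ne (by exact_mod_cast hQ.ne_bot))
  refine ⟨z, ?_⟩
  simp only [IsRoot, eval_sub, eval_add, eval_pow, eval_X, eval_C] at hz
  linear_combination hz

lemma valuation_pow_eq_of_one_lt_pow_sub {Q : ℕ} (hQ : 1 < Q) {z : L} (hz : 1 < V (z ^ Q - z)) :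
    V z ^ Q = V (z ^ Q - z) := by
  have hz₁ : 1 < V z := by
    refine lt_of_not_ge fun h => (V.map_sub (z ^ Q) z).not_gt (lt_of_le_of_lt ?_ hz)
    exact max_le (by rw [map_pow]; exact pow_le_one₀ zero_le h) h
  rw [Valuation.map_sub_eq_of_lt_left, map_pow]
  simpa using pow_lt_pow_right₀ hz₁ hQ

variable {d Q : ℕ} {u v : K} {x y w : L}

lemma valuation_add_inv (hV : ∀ c : K, c ≠ 0 → V (algebraMap K L c) = 1) (hu : u ≠ 0)
    (hx : 1 < V x) : V (algebraMap K L u * x + algebraMap K L v * x⁻¹) = V x := by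
  have hux : V (algebraMap K L u * x) = V x := by rw [map_mul, hV u hu, one_mul]
  rw [Valuation.map_add_eq_of_lt_left, hux]
  calc V (algebraMap K L v * x⁻¹) = V (algebraMap K L v) * (V x)⁻¹ := by rw [map_mul, map_inv₀]
    _ ≤ 1 * 1 := mul_le_mul' (valuation_algebraMap_le_one hV v) (inv_le_one_of_one_le₀ hx.le)
    _ = 1 := mul_one 1
    _ < V (algebraMap K L u * x) := by rwa [hux]

lemma exists_isCurvePoint_valuation [IsAlgClosed L]
    (hV : ∀ c : K, c ≠ 0 → V (algebraMap K L c) = 1) (hd : d ≠ 0) (hQ : 1 < Q) (hu : u ≠ 0)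
    (hx : 1 < V x) :
    ∃ y w, IsCurvePoint d Q u v x y w ∧ V y ^ d = V x ^ (d + 1) ∧ V w ^ Q = V x ^ (Q + 1) := by
  have hx₀ : x ≠ 0 := by rintro rfl; simp at hx
  obtain ⟨d, rfl⟩ := Nat.exists_eq_add_one_of_ne_zero hd
  obtain ⟨Q, rfl⟩ := Nat.exists_eq_add_one_of_ne_zero hQ.ne_bot
  obtain ⟨y, hy⟩ := IsAlgClosed.exists_pow_nat_eq ((x ^ 2 + 1) * x ^ d) d.succ_pos
  obtain ⟨z, hz⟩ := exists_pow_sub_self_eq hQ (algebraMap K L u * x + algebraMap K L v * x⁻¹)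
  have hVz : V z ^ (Q + 1) = V x := by
    have := valuation_add_inv (v := v) hV hu hx
    rw [valuation_pow_eq_of_one_lt_pow_sub hQ (by rwa [hz, this]), hz, this]
  have hVx : V (x ^ 2 + 1) = V x ^ 2 := by
    rw [Valuation.map_add_eq_of_lt_left, map_pow]
    simpa using one_lt_pow₀ hx two_ne_zero
  refine ⟨y, x * z, ⟨hy, ?_⟩, ?_, ?_⟩
  · rw [Nat.add_sub_cancel]
    linear_combination x ^ (Q + 1) * hz + algebraMap K L v * x ^ Q * mul_inv_cancel₀ hx₀
  · rw [← map_pow, hy, map_mul, map_pow, hVx, ← pow_add]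
    congr 1
    omega
  · rw [map_mul, mul_pow, hVz, pow_succ _ (Q + 1)]

lemma hasPoleOrders_curveMonomial (hV : ∀ c : K, c ≠ 0 → V (algebraMap K L c) = 1)
    (hdQ : d.Coprime Q) (hd : d ≠ 0) (hQ : Q ≠ 0) (hx : 1 < V x) (hy : V y ^ d = V x ^ (d + 1))
    (hw : V w ^ Q = V x ^ (Q + 1)) :
    HasPoleOrders K V (d * Q) (V x) (curveMonomial (d := d) (Q := Q) x y w) curveWeight where
  one_lt := hx
  ne_zero := mul_ne_zero hd hQ
  valuation_algebraMap := hV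
  valuation_pow j := by
    calc V (curveMonomial x y w j) ^ (d * Q)
        = V x ^ (d * Q * j.1) * (V y ^ d) ^ (Q * (j.2.1 : ℕ)) * (V w ^ Q) ^ (d * (j.2.2 : ℕ)) := by
          simp only [curveMonomial, map_mul, map_pow, mul_pow, ← pow_mul, mul_comm, mul_left_comm]
      _ = V x ^ curveWeight j := by
          rw [hy, hw, ← pow_mul, ← pow_mul, ← pow_add, ← pow_add, curveWeight]
          congr 1
          ring
  injective := curveWeight_injective hdQ

lemma valuation_curveMonomial_twist_le (hV : ∀ c : K, c ≠ 0 → V (algebraMap K L c) = 1)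
    (hxw : V x ≤ V w) (ζ η : K) (j : ℕ × Fin d × Fin Q) :
    V (curveMonomial x (ζ • y) (w + η • x) j) ≤ V (curveMonomial x y w j) := by
  have hsmul (c : K) (a : L) : V (c • a) ≤ V a := by
    rw [Algebra.smul_def, map_mul]
    exact mul_le_of_le_one_left' (valuation_algebraMap_le_one hV c)
  have hadd : V (w + η • x) ≤ V w :=
    (V.map_add _ _).trans (max_le le_rfl ((hsmul η x).trans hxw))
  simp only [curveMonomial, map_mul, map_pow]
  gcongr
  exact hsmul ζ y

end PlaceAtInfinity

section VanishingOnCurve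

variable {K : Type*} [Field K] {d Q : ℕ} {u v : K}

namespace CurveRing

/-- The monomials in the functions `x`, `ζ * y`, `w + η * x`. At the points whose Frobenius
conjugate is `(x, ζ * y, w + η * x)` they take the same values as powers of `CurveRing.monomial`,
but with much smaller pole orders. -/
noncomputable def twistedMonomial (d Q : ℕ) (u v ζ η : K) : ℕ × Fin d × Fin Q → CurveRing d Q u v :=
  curveMonomial (coord d Q u v 0) (ζ • coord d Q u v 1) (coord d Q u v 2 + η • coord d Q u v 0)

lemma eval_twistedMonomial {A : Type*} [CommRing A] [Algebra K A] {x y w : A}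
    (h : IsCurvePoint d Q u v x y w) (ζ η : K) (j : ℕ × Fin d × Fin Q) :
    eval h (twistedMonomial d Q u v ζ η j) = curveMonomial x (ζ • y) (w + η • x) j := by
  simp [twistedMonomial, map_curveMonomial, eval_coord]

lemma exists_hasPoleOrders (hdQ : d.Coprime Q) (hd : d ≠ 0) (hQ : 1 < Q) (hu : u ≠ 0) :
    ∃ (A : ValuationSubring (AlgebraicClosure (RatFunc K))) (γ : A.ValueGroup)
      (ι : CurveRing d Q u v →ₐ[K] AlgebraicClosure (RatFunc K)),
      HasPoleOrders K A.valuation (d * Q) γ (ι ∘ monomial d Q u v) curveWeight ∧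
      ∀ ζ η j, A.valuation (ι (twistedMonomial d Q u v ζ η j)) ^ (d * Q) ≤ γ ^ curveWeight j := by
  have htrans : Transcendental K (algebraMap (RatFunc K) (AlgebraicClosure (RatFunc K)) .X) :=
    (transcendental_algebraMap_iff (FaithfulSMul.algebraMap_injective _ _)).2
      RatFunc.transcendental_X
  obtain ⟨A, hx, hA⟩ := exists_valuationSubring_of_transcendental htrans
  obtain ⟨y, w, hpt, hy, hw⟩ := exists_isCurvePoint_valuation (v := v) hA hd hQ hu hx
  have hxw : A.valuation (algebraMap (RatFunc K) _ .X) ≤ A.valuation w := by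
    refine le_of_pow_le_pow_left₀ hQ.ne_bot zero_le ?_
    rw [hw]
    exact pow_le_pow_right₀ hx.le Q.le_succ
  have h := hasPoleOrders_curveMonomial hA hdQ hd hQ.ne_bot hx hy hw
  refine ⟨A, A.valuation (algebraMap (RatFunc K) _ .X), eval hpt, ?_, fun ζ η j => ?_⟩
  · convert h using 1
    exact funext fun j => eval_monomial hpt j
  · rw [← h.valuation_pow, eval_twistedMonomial]
    exact pow_le_pow_left₀ zero_le (valuation_curveMonomial_twist_le hA hxw ζ η j) _

end CurveRing

theorem exists_curveMonomial_relation {Ω : Type*} [Field Ω] [Algebra K Ω] {p r M κ : ℕ}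
    [ExpChar Ω p] (hMp : M = p ^ r) (hK : ∀ c : K, c ^ M ^ 2 = c) (hdQ : d.Coprime Q) (hQ : 1 < Q)
    (hu : u ≠ 0) (hκ : κ = Q * (d + 1) * d + d * (Q + 1) * Q) (hM : 2 * κ + 3 < M) (ζ η : K) :
    ∃ c : ℕ × Fin d × Fin Q →₀ K, c ≠ 0 ∧
      (∀ j, c j ≠ 0 → curveWeight j ≤ M ^ 2 + (3 * κ + 3) * M) ∧
      ∀ x y w : Ω, IsCurvePoint d Q u v x y w → x ^ M ^ 2 = x → y ^ M ^ 2 = ζ • y →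
        w ^ M ^ 2 = w + η • x → linearCombination K (curveMonomial x y w) c = 0 := by
  have hd : d ≠ 0 := by rintro rfl; exact hQ.ne' (by simpa using hdQ)
  obtain ⟨A, γ, ι, h, htwist⟩ := CurveRing.exists_hasPoleOrders (v := v) hdQ hd hQ hu
  obtain ⟨c, hc₀, hc, hcP⟩ := h.exists_vanishing_linearCombination (Ω := Ω) hMp hK
    (CurveRing.span_monomial hd hQ) (htwist ζ η)
    (fun m hm => exists_curveWeight_eq hdQ hd hQ.ne_bot (hκ ▸ hm)) hM
  refine ⟨c, hc₀, hc, fun x y w hpt hx hy hw => ?_⟩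
  have heval : CurveRing.eval hpt ∘ CurveRing.monomial d Q u v = curveMonomial x y w :=
    funext fun j => CurveRing.eval_monomial hpt j
  rw [← heval, ← algHom_linearCombination]
  refine hcP _ fun j => ?_
  rw [CurveRing.eval_monomial, CurveRing.eval_twistedMonomial,
    curveMonomial_pow hx.symm hy.symm hw.symm]

end VanishingOnCurve

section FrobeniusOnFibre

variable {K Ω : Type*} [Field K] [Field Ω] [Algebra K Ω] {d Q : ℕ} {u v x₀ : K} {y w : Ω}

lemma pow_pow_eq_add_sum_of_pow_eq_add {R : Type*} [CommRing R] {p s : ℕ} [ExpChar R p]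
    (hQ : Q = p ^ s) {z g : R} (hz : z ^ Q = z + g) (k : ℕ) :
    z ^ Q ^ k = z + ∑ i ∈ Finset.range k, g ^ Q ^ i := by
  induction k with
  | zero => simp
  | succ k ih =>
    have hadd (a b : R) : (a + b) ^ Q ^ k = a ^ Q ^ k + b ^ Q ^ k := by
      rw [hQ, ← pow_mul, add_pow_expChar_pow]
    rw [pow_succ', pow_mul, hz, hadd, ih, Finset.sum_range_succ, add_assoc]

lemma IsCurvePoint.y_pow_eq_smul (h : IsCurvePoint d Q u v (algebraMap K Ω x₀) y w) (hd : d ≠ 0)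
    (hx₀ : x₀ ≠ 0) {G N : ℕ} (hG : d * G + 1 = N) (hN : x₀ ^ N = x₀) :
    y ^ N = (x₀ + x₀⁻¹) ^ G • y := by
  have hy : y ^ d = algebraMap K Ω ((x₀ + x₀⁻¹) * x₀ ^ d) := by
    rw [h.pow_y, ← map_pow, ← map_pow, ← map_one (algebraMap K Ω), ← map_add, ← map_mul]
    obtain ⟨d, rfl⟩ := Nat.exists_eq_add_one_of_ne_zero hd
    congr 1
    rw [Nat.add_sub_cancel]
    field_simp
    ring
  have hxG : x₀ ^ (d * G) = 1 :=
    mul_right_cancel₀ hx₀ (by rw [← pow_succ, hG, hN, one_mul])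
  rw [← hG, pow_succ, pow_mul, hy, ← map_pow, mul_pow, ← pow_mul, hxG, mul_one, Algebra.smul_def]

lemma IsCurvePoint.w_pow_eq_add_smul {p s : ℕ} [ExpChar Ω p] (hQ : Q = p ^ s)
    (h : IsCurvePoint d Q u v (algebraMap K Ω x₀) y w) (hx₀ : x₀ ≠ 0) {k : ℕ}
    (hk : x₀ ^ Q ^ k = x₀) :
    w ^ Q ^ k = w +
      (∑ i ∈ Finset.range k, (u * x₀ + v * x₀⁻¹) ^ Q ^ i) • algebraMap K Ω x₀ := by
  have hX₀ : algebraMap K Ω x₀ ≠ 0 := by simpa using hx₀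
  obtain ⟨z, rfl⟩ : ∃ z, w = algebraMap K Ω x₀ * z := ⟨w / algebraMap K Ω x₀, by field_simp⟩
  have hz : z ^ Q = z + algebraMap K Ω (u * x₀ + v * x₀⁻¹) := by
    have hw := h.pow_w
    have hQ₀ : Q ≠ 0 := hQ ▸ (Nat.pow_pos (expChar_pos Ω p)).ne'
    obtain ⟨Q, rfl⟩ := Nat.exists_eq_add_one_of_ne_zero hQ₀
    rw [Nat.add_sub_cancel] at hw
    refine mul_left_cancel₀ (pow_ne_zero (Q + 1) hX₀) ?_
    simp only [map_add, map_mul, map_inv₀]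
    linear_combination hw - algebraMap K Ω v * algebraMap K Ω x₀ ^ Q * mul_inv_cancel₀ hX₀
  rw [mul_pow, ← map_pow, hk, pow_pow_eq_add_sum_of_pow_eq_add hQ hz, Algebra.smul_def, map_sum]
  simp only [map_pow]
  ring

end FrobeniusOnFibre

section FibreBound

open Polynomial

lemma exists_polynomial_coeff_eq {K A I : Type*} [CommRing K] [CommRing A] [Algebra K A]
    [Fintype I] (c : ℕ × I →₀ K) :
    ∃ h : I → K[X], (∀ l i, (h i).coeff l = c (l, i)) ∧
      ∀ (x : A) (f : I → A), linearCombination K (fun j : ℕ × I => x ^ j.1 * f j.2) c =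
        ∑ i, aeval x (h i) * f i := by
  classical
  induction c using Finsupp.induction_linear with
  | zero => exact ⟨0, by simp, by simp⟩
  | add c c' hc hc' =>
    obtain ⟨h, hcoeff, hsum⟩ := hc
    obtain ⟨h', hcoeff', hsum'⟩ := hc'
    refine ⟨h + h', by simp [hcoeff, hcoeff'], fun x f => ?_⟩
    simp [hsum, hsum', add_mul, Finset.sum_add_distrib]
  | single j a =>
    obtain ⟨l, i⟩ := j
    refine ⟨Pi.single i (monomial l a), fun l' i' => ?_, fun x f => ?_⟩
    · obtain rfl | hi := eq_or_ne i' i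
      · simp [coeff_monomial, Finsupp.single_apply]
      · simp [hi]
    · rw [Finset.sum_eq_single i (fun i' _ hi => by simp [hi]) (by simp)]
      simp [aeval_monomial, Algebra.smul_def, mul_assoc]

lemma eq_zero_of_forall_root_sum_mul_pow_eq_zero {F : Type*} [Field F] {f : F[X]} {m : ℕ}
    (hf : f.Separable) (hsplits : f.Splits) (hm : f.natDegree = m) {a : Fin m → F}
    (h : ∀ y, f.IsRoot y → ∑ i, a i * y ^ (i : ℕ) = 0) : a = 0 := by
  have hcard : Fintype.card (f.rootSet F) = m := by
    rw [card_rootSet_eq_natDegree hf (by simpa using hsplits), hm]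
  obtain e := (Fintype.equivFinOfCardEq hcard).symm
  refine Matrix.eq_zero_of_forall_index_sum_mul_pow_eq_zero
    (f := fun j => (e j : F)) (Subtype.val_injective.comp e.injective) fun j => h _ ?_
  simpa [mem_rootSet, IsRoot] using (mem_rootSet.1 (e j).2).2

variable {K Ω : Type*} [Field K] [Field Ω] [Algebra K Ω] [IsAlgClosed Ω] {d Q : ℕ} {u v : K}

lemma eq_zero_of_forall_isCurvePoint_sum_eq_zero {x : Ω} (hx : x ≠ 0) (hx' : x ^ 2 + 1 ≠ 0)
    (hd : (d : Ω) ≠ 0) (hQ : (Q : Ω) = 0) (hQ' : 1 < Q) {a : Fin d × Fin Q → Ω}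
    (h : ∀ y w, IsCurvePoint d Q u v x y w →
      ∑ i, a i * (y ^ (i.1 : ℕ) * w ^ (i.2 : ℕ)) = 0) : a = 0 := by
  set fy : Polynomial Ω := X ^ d - C ((x ^ 2 + 1) * x ^ (d - 1)) with hfy
  set fw : Polynomial Ω := X ^ Q - (C (x ^ (Q - 1)) * X +
    C (algebraMap K Ω u * x ^ (Q + 1) + algebraMap K Ω v * x ^ (Q - 1))) with hfw
  have hfy_sep : fy.Separable :=
    separable_X_pow_sub_C _ hd (mul_ne_zero hx' (pow_ne_zero _ hx))
  have hfw_sep : fw.Separable := by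
    have hderiv : derivative fw = C (-x ^ (Q - 1)) := by
      simp only [hfw, derivative_sub, derivative_add, derivative_X_pow, derivative_C,
        derivative_C_mul, derivative_X, hQ, map_zero, map_neg, zero_mul, mul_one, add_zero,
        zero_sub]
    have hunit : IsUnit (C (-x ^ (Q - 1))) :=
      isUnit_C.2 (neg_ne_zero.2 (pow_ne_zero _ hx)).isUnit
    rw [Separable, hderiv]
    exact isCoprime_one_right.of_isCoprime_of_dvd_right hunit.dvd
  have hfw_deg : fw.natDegree = Q := by
    rw [hfw, natDegree_sub_eq_left_of_natDegree_lt, natDegree_X_pow]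
    rw [natDegree_X_pow]
    exact natDegree_linear_le.trans_lt hQ'
  have hroot (y w : Ω) (hy : fy.IsRoot y) (hw : fw.IsRoot w) :
      ∑ j, (∑ i, a (i, j) * y ^ (i : ℕ)) * w ^ (j : ℕ) = 0 := by
    have hpt : IsCurvePoint d Q u v x y w := by
      simp only [hfy, hfw, IsRoot, eval_sub, eval_add, eval_pow, eval_mul, eval_X, eval_C] at hy hw
      exact ⟨by linear_combination hy, by linear_combination hw⟩
    rw [← h y w hpt, Fintype.sum_prod_type_right]
    simp only [Finset.sum_mul, mul_assoc]
  ext ⟨i, j⟩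
  refine congrFun (eq_zero_of_forall_root_sum_mul_pow_eq_zero (a := fun i => a (i, j)) hfy_sep
    (IsAlgClosed.splits _) (natDegree_X_pow_sub_C) fun y hy => ?_) i
  exact congrFun (eq_zero_of_forall_root_sum_mul_pow_eq_zero hfw_sep (IsAlgClosed.splits _) hfw_deg
    fun w hw => hroot y w hy hw) j

lemma isRoot_of_forall_isCurvePoint_sum_eq_zero {x : K} (hx : x ≠ 0) (hx' : x + x⁻¹ ≠ 0)
    (hd : (d : Ω) ≠ 0) (hQ : (Q : Ω) = 0) (hQ' : 1 < Q) {h : Fin d × Fin Q → K[X]}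
    (hsum : ∀ y w : Ω, IsCurvePoint d Q u v (algebraMap K Ω x) y w →
      ∑ i, aeval (algebraMap K Ω x) (h i) * (y ^ (i.1 : ℕ) * w ^ (i.2 : ℕ)) = 0)
    (i : Fin d × Fin Q) : (h i).IsRoot x := by
  have hx_sq : (algebraMap K Ω x) ^ 2 + 1 ≠ 0 := by
    rw [← map_pow, ← map_one (algebraMap K Ω), ← map_add, Ne, map_eq_zero]
    exact fun h₀ => hx' (by field_simp; simpa using h₀)
  have hvanish :=
    eq_zero_of_forall_isCurvePoint_sum_eq_zero (by simpa using hx) hx_sq hd hQ hQ' hsum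
  simpa [aeval_algebraMap_apply, IsRoot] using congrFun hvanish i

/-- The elements of `K` over which the curve of `IsCurvePoint` is unramified, with the points above
them mapped by the `Q ^ k`-power Frobenius to their translates by `ζ` and `η`. -/
def frobeniusFibre (Q G k : ℕ) (u v ζ η : K) : Set K :=
  {x | x ≠ 0 ∧ x + x⁻¹ ≠ 0 ∧ (x + x⁻¹) ^ G = ζ ∧
    ∑ i ∈ Finset.range k, (u * x + v * x⁻¹) ^ Q ^ i = η}

theorem mul_card_le_of_subset_frobeniusFibre [Fintype K] {p s r M κ G : ℕ} [Fact p.Prime]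
    [CharP K p] (hs : s ≠ 0) (hQ : Q = p ^ s) (hM : M = Q ^ r) (hK : Fintype.card K = M ^ 2)
    (hdQ : d.Coprime Q) (hG : d * G + 1 = M ^ 2) (hu : u ≠ 0)
    (hκ : κ = Q * (d + 1) * d + d * (Q + 1) * Q) (hκM : 2 * κ + 3 < M) {ζ η : K} {S : Finset K}
    (hS : ↑S ⊆ frobeniusFibre Q G (2 * r) u v ζ η) :
    d * Q * S.card ≤ M ^ 2 + (3 * κ + 3) * M := by
  let Ω := AlgebraicClosure K
  have : ExpChar Ω p := (ExpChar.prime Fact.out : ExpChar Ω p)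
  have hQ₁ : 1 < Q := hQ ▸ Nat.one_lt_pow hs (Fact.out : p.Prime).one_lt
  have hd : d ≠ 0 := by rintro rfl; exact hQ₁.ne' (by simpa using hdQ)
  have hfrob (c : K) : c ^ M ^ 2 = c := hK ▸ FiniteField.pow_card c
  have hMQ : M ^ 2 = Q ^ (2 * r) := by rw [hM, ← pow_mul, mul_comm]
  have hpQ : p ∣ Q := hQ ▸ dvd_pow_self p hs
  have hQΩ : (Q : Ω) = 0 := (CharP.cast_eq_zero_iff Ω p Q).2 hpQ
  have hdΩ : (d : Ω) ≠ 0 := fun h₀ => (Fact.out : p.Prime).one_lt.ne'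
    (Nat.eq_one_of_dvd_coprimes hdQ ((CharP.cast_eq_zero_iff Ω p d).1 h₀) hpQ)
  obtain ⟨c, hc₀, hc, hcurve⟩ := exists_curveMonomial_relation (Ω := Ω) (v := v) (p := p)
    (r := s * r) (by rw [hM, hQ, pow_mul]) hfrob hdQ hQ₁ hu hκ hκM ζ η
  obtain ⟨h, hcoeff, hsum⟩ := exists_polynomial_coeff_eq (A := Ω) c
  have hroot : ∀ x ∈ S, ∀ i, (h i).IsRoot x := by
    intro x hxS i
    obtain ⟨hx, hf, rfl, rfl⟩ := hS hxS
    refine isRoot_of_forall_isCurvePoint_sum_eq_zero (u := u) (v := v) hx hf hdΩ hQΩ hQ₁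
      (fun y w hpt => ?_) i
    have hrel := hcurve _ y w hpt (by rw [← map_pow, hfrob])
      (hpt.y_pow_eq_smul hd hx hG (hfrob x)) (hMQ ▸ hpt.w_pow_eq_add_smul hQ hx (hMQ ▸ hfrob x))
    have hassoc : curveMonomial (d := d) (Q := Q) (algebraMap K Ω x) y w =
        fun j => algebraMap K Ω x ^ j.1 * (y ^ (j.2.1 : ℕ) * w ^ (j.2.2 : ℕ)) :=
      funext fun _ => mul_assoc ..
    rwa [hassoc, hsum _ fun i : Fin d × Fin Q => y ^ (i.1 : ℕ) * w ^ (i.2 : ℕ)] at hrel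
  obtain ⟨⟨l, i⟩, hli⟩ := Finsupp.ne_iff.1 hc₀
  have hi : h i ≠ 0 := fun h₀ => hli (by simp [← hcoeff, h₀])
  have hlead : c ((h i).natDegree, i) ≠ 0 := hcoeff _ i ▸ leadingCoeff_ne_zero.2 hi
  have hcard : S.card ≤ (h i).natDegree :=
    card_le_degree_of_subset_roots fun x hx => (mem_roots hi).2 (hroot x hx i)
  calc d * Q * S.card ≤ d * Q * (h i).natDegree := Nat.mul_le_mul_left _ hcard
    _ ≤ curveWeight ((h i).natDegree, i) := by
        rw [curveWeight, add_assoc]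
        exact Nat.le_add_right ..
    _ ≤ _ := hc _ hlead

end FibreBound

section EvenDegreeBound

lemma norm_sum_comp_le_of_card_fiber_le {α β : Type*} [DecidableEq β] {T : Finset α}
    {I : Finset β} {φ : α → β} (hφ : Set.MapsTo φ T I) (hI : I.Nonempty) {A B δ : ℝ} (hB : 0 ≤ B)
    (hfib : ∀ c ∈ I, (I.card : ℝ) * (T.filter (φ · = c)).card ≤ A + B)
    (hT : A ≤ T.card + δ) {F : β → ℂ} (hF : ∀ c, ‖F c‖ ≤ 1) (hF₀ : ∑ c ∈ I, F c = 0) :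
    ‖∑ x ∈ T, F (φ x)‖ ≤ 2 * B + δ := by
  set D : ℝ := (I.card : ℝ)
  have hD : 1 ≤ D := Nat.one_le_cast.2 hI.card_pos
  let excess (c : β) : ℝ := D * (T.filter (φ · = c)).card - A
  have hexcess_sum : -(D * δ) ≤ ∑ c ∈ I, excess c := by
    have hcard : ∑ c ∈ I, ((T.filter (φ · = c)).card : ℝ) = T.card := by
      exact_mod_cast (Finset.card_eq_sum_card_fiberwise hφ).symm
    simp only [excess, Finset.sum_sub_distrib, ← Finset.mul_sum, Finset.sum_const, nsmul_eq_mul,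
      hcard]
    nlinarith
  have hsum : D * ∑ x ∈ T, F (φ x) = ∑ c ∈ I, excess c * F c := by
    have hfiber : ∑ x ∈ T, F (φ x) = ∑ c ∈ I, (T.filter (φ · = c)).card * F c := by
      rw [← Finset.sum_fiberwise_of_maps_to hφ]
      refine Finset.sum_congr rfl fun c _ => ?_
      rw [Finset.sum_congr rfl fun x hx => by rw [(Finset.mem_filter.1 hx).2], Finset.sum_const,
        nsmul_eq_mul]
    simp only [excess, Complex.ofReal_sub, Complex.ofReal_mul, Complex.ofReal_natCast, sub_mul,
      Finset.sum_sub_distrib, ← Finset.mul_sum, hF₀, mul_zero, sub_zero, hfiber, mul_assoc]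
  have hterm : ∀ c ∈ I, ‖(excess c : ℂ) * F c‖ ≤ 2 * B - excess c := by
    intro c hc
    have hle : excess c ≤ B := sub_le_iff_le_add'.2 (hfib c hc)
    rw [norm_mul, Complex.norm_real, Real.norm_eq_abs]
    refine (mul_le_of_le_one_right (abs_nonneg _) (hF c)).trans ?_
    exact abs_le.2 ⟨by linarith, by linarith⟩
  refine le_of_mul_le_mul_left ?_ (zero_lt_one.trans_le hD)
  calc D * ‖∑ x ∈ T, F (φ x)‖ = ‖∑ c ∈ I, (excess c : ℂ) * F c‖ := by
        rw [← hsum, norm_mul, Complex.norm_real, Real.norm_of_nonneg (zero_le_one.trans hD)]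
    _ ≤ ∑ c ∈ I, (2 * B - excess c) := norm_sum_le_of_le I hterm
    _ = D * (2 * B) - ∑ c ∈ I, excess c := by
        rw [Finset.sum_sub_distrib, Finset.sum_const, nsmul_eq_mul]
    _ ≤ D * (2 * B + δ) := by linarith

open Polynomial in
lemma card_add_inv_eq_zero_le {K : Type*} [Field K] [Fintype K] [DecidableEq K] :
    (Finset.univ.filter fun x : K => x + x⁻¹ = 0).card ≤ 3 := by
  have hdeg : (X ^ 3 + X : K[X]).natDegree = 3 := by compute_degree!
  have hne : (X ^ 3 + X : K[X]) ≠ 0 := ne_zero_of_natDegree_gt (hdeg ▸ three_pos)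
  refine hdeg ▸ card_le_degree_of_subset_roots fun x hx => (mem_roots hne).2 ?_
  have hx : x + x⁻¹ = 0 := by simpa using hx
  obtain rfl | hx₀ := eq_or_ne x 0
  · simp [IsRoot]
  · have : x ^ 3 + x = x ^ 2 * (x + x⁻¹) := by field_simp
    simp [IsRoot, this, hx]

lemma card_le_card_add_inv_ne_zero_add_three {K : Type*} [Field K] [Fintype K] [DecidableEq K] :
    Fintype.card K ≤ (Finset.univ.filter fun x : K => x + x⁻¹ ≠ 0).card + 3 := by
  rw [← Finset.card_univ, ← Finset.card_filter_add_card_filter_not fun x : K => x + x⁻¹ = 0,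
    add_comm]
  exact Nat.add_le_add_left card_add_inv_eq_zero_le _

lemma norm_mulChar_apply_le_one {E : Type*} [Field E] [Finite E] (χ : MulChar E ℂ) (a : E) :
    ‖χ a‖ ≤ 1 := by
  have : Fintype E := Fintype.ofFinite E
  obtain rfl | ha := eq_or_ne a 0
  · simp [MulChar.map_zero]
  · have hpow : χ a ^ (Fintype.card E - 1) = 1 := by
      rw [← map_pow, FiniteField.pow_card_sub_one_eq_one a ha, map_one]
    exact (Complex.norm_eq_one_of_pow_eq_one hpow (Nat.sub_pos_of_lt Fintype.one_lt_card).ne').le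

/-- The constant `Q ^ 2 * (Q - 1) + (Q - 1) * (Q + 1) * Q` from which on every integer is the pole
order of a function on the curve with `d = Q - 1`. -/
def poleOrderBound (Q : ℕ) : ℕ := Q * (Q - 1 + 1) * (Q - 1) + (Q - 1) * (Q + 1) * Q

lemma mul_card_norm_trace_fiber_le {E K : Type*} [Field E] [Fintype E] [DecidableEq E] [Field K]
    [Finite K] [Algebra E K] {r Q : ℕ} (hQ : Fintype.card E = Q)
    (hr : Module.finrank E K = 2 * r) (hM : 2 * poleOrderBound Q + 3 < Q ^ r) {u : E} (hu : u ≠ 0)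
    (v : E) {T : Finset K} (hT : ∀ x ∈ T, x + x⁻¹ ≠ 0) (ζ η : E) :
    (Q - 1) * Q * (T.filter fun x => (Algebra.norm E (x + x⁻¹), Algebra.trace E K
      (algebraMap E K u * x + algebraMap E K v * x⁻¹)) = (ζ, η)).card ≤
      (Q ^ r) ^ 2 + (3 * poleOrderBound Q + 3) * Q ^ r := by
  have : Fintype K := Fintype.ofFinite K
  obtain ⟨p, hp⟩ := CharP.exists E
  have : Fact p.Prime := ⟨CharP.char_is_prime E p⟩
  have : CharP K p := charP_of_injective_algebraMap (algebraMap E K).injective p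
  obtain ⟨s, -, hs⟩ := FiniteField.card E p
  have hK : Fintype.card K = (Q ^ r) ^ 2 := by
    rw [Module.card_eq_pow_finrank (K := E), hr, hQ, ← pow_mul, mul_comm]
  have hQ₁ : 1 < Q := hQ ▸ Fintype.one_lt_card
  have hdvd : Q - 1 ∣ (Q ^ r) ^ 2 - 1 := by
    simpa only [one_pow, pow_mul] using Nat.sub_dvd_pow_sub_pow Q 1 (r * 2)
  refine mul_card_le_of_subset_frobeniusFibre (p := p) s.ne_zero (hQ ▸ hs) rfl hK
    ((Nat.coprime_self_sub_left hQ₁.le).2 (Nat.coprime_one_left Q))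
    (G := ((Q ^ r) ^ 2 - 1) / (Q - 1)) (u := algebraMap E K u) (v := algebraMap E K v)
    (ζ := algebraMap E K ζ) (η := algebraMap E K η) ?_ (by simpa using hu) rfl hM ?_
  · rw [Nat.mul_div_cancel' hdvd, Nat.sub_add_cancel (Nat.pow_pos (Nat.pow_pos hQ₁.pos))]
  · intro x hx
    obtain ⟨hxT, hx⟩ := Finset.mem_filter.1 hx
    obtain ⟨rfl, rfl⟩ := Prod.mk.inj hx
    refine ⟨fun h₀ => hT x hxT (by simp [h₀]), hT x hxT, ?_, ?_⟩
    · rw [FiniteField.algebraMap_norm_eq_pow, Nat.card_eq_fintype_card, Nat.card_eq_fintype_card,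
        hK, hQ]
    · rw [FiniteField.algebraMap_trace_eq_sum_pow, hr, Nat.card_eq_fintype_card, hQ]

variable {E : Type*} (K : Type*) [Field E] [Field K] [Fintype K] [Algebra E K]

/-- The sum over an extension `K` of `E` of the lifts by norm and trace of the characters `χ` and
`ψ`, at the arguments `x + x⁻¹` and `u * x + v * x⁻¹`. With `0⁻¹ = 0` the term at `x = 0` is
`χ 0 = 0`. -/
noncomputable def liftedSum (χ : MulChar E ℂ) (ψ : AddChar E ℂ) (u v : E) : ℂ :=
  ∑ x : K, χ (Algebra.norm E (x + x⁻¹)) *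
    ψ (Algebra.trace E K (algebraMap E K u * x + algebraMap E K v * x⁻¹))

lemma liftedSum_comm (χ : MulChar E ℂ) (ψ : AddChar E ℂ) (u v : E) :
    liftedSum K χ ψ u v = liftedSum K χ ψ v u := by
  rw [liftedSum, ← Equiv.sum_comp (Equiv.inv K)]
  simp only [Equiv.inv_apply, inv_inv, add_comm, liftedSum]

variable {K} [Fintype E]

lemma norm_sum_norm_trace_le {r Q : ℕ} (hQ : Fintype.card E = Q)
    (hr : Module.finrank E K = 2 * r) (hM : 2 * poleOrderBound Q + 3 < Q ^ r) {u : E} (hu : u ≠ 0)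
    (v : E) {F : E → E → ℂ} (hF₀ : ∀ η, F 0 η = 0) (hF : ∀ ζ η, ‖F ζ η‖ ≤ 1)
    (hFsum : ∑ ζ, ∑ η, F ζ η = 0) :
    ‖∑ x : K, F (Algebra.norm E (x + x⁻¹))
      (Algebra.trace E K (algebraMap E K u * x + algebraMap E K v * x⁻¹))‖ ≤
      (6 * poleOrderBound Q + 9) * (Q : ℝ) ^ r := by
  classical
  set κ := poleOrderBound Q
  let φ (x : K) : E × E := (Algebra.norm E (x + x⁻¹),
    Algebra.trace E K (algebraMap E K u * x + algebraMap E K v * x⁻¹))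
  let I : Finset (E × E) := {0}ᶜ ×ˢ Finset.univ
  let T : Finset K := Finset.univ.filter fun x => x + x⁻¹ ≠ 0
  have hIcard : I.card = (Q - 1) * Q := by
    rw [Finset.card_product, Finset.card_compl, Finset.card_singleton, Finset.card_univ, hQ]
  have hQ₁ : 1 < Q := hQ ▸ Fintype.one_lt_card
  have hI : I.Nonempty := Finset.card_pos.1 (hIcard ▸ Nat.mul_pos (Nat.sub_pos_of_lt hQ₁) hQ₁.pos)
  have hTmem {x : K} : x ∈ T ↔ x + x⁻¹ ≠ 0 := by simp [T]
  have hφ : Set.MapsTo φ T I := fun x hx => by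
    simpa [I, φ, Algebra.norm_eq_zero_iff] using hTmem.1 hx
  have hTcard : (((Q ^ r) ^ 2 : ℕ) : ℝ) ≤ T.card + 3 := by
    rw [← pow_mul, mul_comm, ← hr, ← hQ, ← Module.card_eq_pow_finrank]
    exact_mod_cast card_le_card_add_inv_ne_zero_add_three
  have hrestrict : ∑ x : K, F (φ x).1 (φ x).2 = ∑ x ∈ T, F (φ x).1 (φ x).2 := by
    refine (Finset.sum_subset T.subset_univ fun x _ hx => ?_).symm
    have hx : x + x⁻¹ = 0 := not_not.1 (mt hTmem.2 hx)
    simp [φ, hx, hF₀]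
  have hFI : ∑ c ∈ I, F c.1 c.2 = 0 := by
    rw [← hFsum, ← Finset.sum_product']
    refine Finset.sum_subset I.subset_univ fun c _ hc => ?_
    have : c.1 = 0 := by simpa [I] using hc
    rw [this, hF₀]
  have hQr : (1 : ℝ) ≤ (Q : ℝ) ^ r := one_le_pow₀ (by exact_mod_cast hQ₁.le)
  refine hrestrict ▸ (norm_sum_comp_le_of_card_fiber_le (B := (3 * κ + 3) * (Q : ℝ) ^ r) hφ hI
    (by positivity) (fun c _ => ?_) hTcard (F := fun c => F c.1 c.2)
    (fun c => hF _ _) hFI).trans (by linarith)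
  rw [hIcard]
  exact_mod_cast mul_card_norm_trace_fiber_le hQ hr hM hu v (fun x hx => hTmem.1 hx) c.1 c.2

theorem norm_liftedSum_le_of_even {r Q : ℕ} (hQ : Fintype.card E = Q)
    (hr : Module.finrank E K = 2 * r) (hM : 2 * poleOrderBound Q + 3 < Q ^ r) {χ : MulChar E ℂ}
    {ψ : AddChar E ℂ} (hψ : ψ ≠ 1) {u v : E} (huv : χ ≠ 1 ∨ u ≠ 0 ∨ v ≠ 0) :
    ‖liftedSum K χ ψ u v‖ ≤ (6 * poleOrderBound Q + 9) * (Q : ℝ) ^ r := by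
  have main {u : E} (hu : u ≠ 0) (v : E) :
      ‖liftedSum K χ ψ u v‖ ≤ (6 * poleOrderBound Q + 9) * (Q : ℝ) ^ r := by
    refine norm_sum_norm_trace_le hQ hr hM hu v (F := fun ζ η => χ ζ * ψ η)
      (by simp [MulChar.map_zero]) ?_ ?_
    · intro ζ η
      rw [norm_mul, AddChar.norm_apply, mul_one]
      exact norm_mulChar_apply_le_one χ ζ
    · simp only [← Finset.mul_sum, AddChar.sum_eq_zero_of_ne_one hψ, mul_zero,
        Finset.sum_const_zero]
  by_cases hu : u = 0
  · by_cases hv : v = 0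
    · have hχ : χ ≠ 1 := by simpa [hu, hv] using huv
      have hsum : ∑ ζ : E, ∑ _η : E, χ ζ = 0 := by
        rw [Finset.sum_comm]
        simp [MulChar.sum_eq_zero_of_ne_one hχ]
      simpa [liftedSum, hu, hv] using norm_sum_norm_trace_le hQ hr hM one_ne_zero 0
        (F := fun ζ _ => χ ζ) (by simp [MulChar.map_zero])
        (fun ζ _ => norm_mulChar_apply_le_one χ ζ) hsum
    · exact liftedSum_comm K χ ψ u v ▸ main hv u
  · exact main hu v

end EvenDegreeBound

section PowerSums

lemma norm_le_one_of_norm_sum_pow_le {ι : Type*} [Fintype ι] {β : ι → ℂ} {C : ℝ} {r₀ : ℕ}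
    (h : ∀ r ≥ r₀, ‖∑ i, β i ^ r‖ ≤ C) (i₀ : ι) : ‖β i₀‖ ≤ 1 := by
  by_contra! hgt
  let z (i : ι) : Circle := Circle.exp (β i).arg
  have hpolar (i : ι) : β i = ‖β i‖ * (z i : ℂ) := by
    simp only [z, Circle.coe_exp]
    exact (Complex.norm_mul_exp_arg_mul_I _).symm
  have hnear : ∀ᶠ y : ι → Circle in nhds 1, ∀ i, 1 / 2 < (y i : ℂ).re := by
    refine Filter.eventually_all.2 fun i => ?_
    have hcont : Continuous fun y : ι → Circle => (y i : ℂ).re := by fun_prop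
    exact hcont.continuousAt.eventually (lt_mem_nhds (by simp; norm_num))
  -- By recurrence of the rotation `z`, all `β i ^ r` eventually point to the right together.
  have hreturn := (mapClusterPt_one_atTop_pow z).frequently hnear
  have hgrow := (tendsto_pow_atTop_atTop_of_one_lt hgt).eventually_gt_atTop (2 * C)
  obtain ⟨r, ⟨hre, hlarge⟩, hr⟩ :=
    ((hreturn.and_eventually hgrow).and_eventually (Filter.eventually_ge_atTop r₀)).exists
  have hbound (i : ι) : ‖β i‖ ^ r / 2 ≤ (β i ^ r).re := by
    have hpow : (β i ^ r).re = ‖β i‖ ^ r * ((z ^ r) i : ℂ).re := by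
      conv_lhs => rw [hpolar i, mul_pow, ← Complex.ofReal_pow, Complex.re_ofReal_mul]
      simp
    rw [hpow, div_eq_mul_one_div]
    exact mul_le_mul_of_nonneg_left (hre i).le (by positivity)
  have : C < C := calc
    C < ‖β i₀‖ ^ r / 2 := by linarith
    _ ≤ (β i₀ ^ r).re := hbound i₀
    _ ≤ ∑ i, (β i ^ r).re := Finset.single_le_sum (f := fun i => (β i ^ r).re)
        (fun i _ => le_trans (by positivity) (hbound i)) (Finset.mem_univ i₀)
    _ = (∑ i, β i ^ r).re := (Complex.re_sum _ _).symm
    _ ≤ ‖∑ i, β i ^ r‖ := Complex.re_le_norm _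
    _ ≤ C := h r hr
  exact this.false

open Polynomial in
lemma exists_monic_coeff_sub_eq {R : Type*} [CommRing R] [Nontrivial R] {c : ℕ → R} (N : ℕ)
    (hc₀ : c 0 = 1) :
    ∃ P : R[X], P.Monic ∧ P.natDegree = N ∧ ∀ m ≤ N, P.coeff (N - m) = c m := by
  let P : R[X] := ∑ m ∈ Finset.range (N + 1), monomial (N - m) (c m)
  have hcoeff : ∀ m ≤ N, P.coeff (N - m) = c m := by
    intro m hm
    simp only [P, finsetSum_coeff, coeff_monomial]
    rw [Finset.sum_eq_single_of_mem m (Finset.mem_range.2 (by omega)), if_pos rfl]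
    intro b hb hbm
    rw [if_neg]
    have := Finset.mem_range.1 hb
    omega
  have hlead : P.coeff N = 1 := hc₀ ▸ hcoeff 0 N.zero_le
  have hdeg : P.natDegree ≤ N :=
    natDegree_sum_le_of_forall_le _ _ fun m _ => (natDegree_monomial_le _).trans (N.sub_le m)
  exact ⟨P, monic_of_natDegree_le_of_coeff_eq_one N hdeg hlead,
    natDegree_eq_of_le_of_coeff_ne_zero hdeg (hlead ▸ one_ne_zero), hcoeff⟩

open Polynomial in
lemma exists_eq_neg_one_pow_mul_esymm {F : Type*} [Field F] [IsAlgClosed F] {c : ℕ → F} {N : ℕ}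
    (hc₀ : c 0 = 1) (hc : ∀ m > N, c m = 0) :
    ∃ α : Fin N → F, ∀ m,
      c m = (-1) ^ m * MvPolynomial.aeval α (MvPolynomial.esymm (Fin N) F m) := by
  obtain ⟨P, hmonic, hdeg, hcoeff⟩ := exists_monic_coeff_sub_eq N hc₀
  have hcard : P.roots.card = N := by
    rw [← (IsAlgClosed.splits P).natDegree_eq_card_roots, hdeg]
  obtain ⟨α, hα⟩ : ∃ α : Fin N → F, Finset.univ.val.map α = P.roots := by
    obtain ⟨l, hl⟩ : ∃ l : List F, (l : Multiset F) = P.roots := Quot.exists_rep _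
    obtain rfl : l.length = N := by rw [← hcard, ← hl, Multiset.coe_card]
    exact ⟨l.get, by rw [Fin.univ_val_map, List.ofFn_get, hl]⟩
  refine ⟨α, fun m => ?_⟩
  rw [MvPolynomial.aeval_esymm_eq_multiset_esymm, hα]
  by_cases hm : m ≤ N
  · rw [← hcoeff m hm, coeff_eq_esymm_roots_of_card (by rw [hcard, hdeg]) (by omega),
      hmonic.leadingCoeff, hdeg, one_mul, Nat.sub_sub_self hm]
  · rw [hc m (by omega), Multiset.esymm, Multiset.powersetCard_eq_empty _ (by omega)]
    simp

lemma natCast_mul_neg_one_pow_mul_esymm {R σ : Type*} [CommRing R] [Fintype σ] (α : σ → R)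
    {c : ℕ → R} (hc : ∀ m, c m = (-1) ^ m * MvPolynomial.aeval α (MvPolynomial.esymm σ R m))
    (m : ℕ) : m * c m = ∑ i ∈ Finset.range m, c i * -∑ j, α j ^ (m - i) := by
  classical
  have hnewton := congrArg (MvPolynomial.aeval α) (MvPolynomial.mul_esymm_eq_sum σ R m)
  simp only [map_mul, map_natCast, map_pow, map_neg, map_one, map_sum, MvPolynomial.psum,
    MvPolynomial.aeval_X, ← hc] at hnewton
  calc (m : R) * c m
      = -∑ a ∈ Finset.HasAntidiagonal.antidiagonal m with a.1 < m, c a.1 * ∑ j, α j ^ a.2 := by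
        rw [hc m, mul_left_comm, hnewton, ← mul_assoc, ← pow_add,
          Odd.neg_one_pow ⟨m, by ring⟩, neg_one_mul]
    _ = _ := by
        rw [Finset.sum_filter, Finset.Nat.sum_antidiagonal_eq_sum_range_succ_mk,
          ← Finset.sum_filter, ← Finset.sum_neg_distrib]
        refine Finset.sum_congr ?_ fun i _ => (mul_neg _ _).symm
        ext i
        simp only [Finset.mem_filter, Finset.mem_range]
        omega

lemma eq_neg_sum_pow_of_newton {R σ : Type*} [CommRing R] [Fintype σ] {α : σ → R} {c S : ℕ → R}
    (hc₀ : c 0 = 1) (hc : ∀ m, c m = (-1) ^ m * MvPolynomial.aeval α (MvPolynomial.esymm σ R m))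
    (hrec : ∀ m : ℕ, m * c m = ∑ i ∈ Finset.range m, c i * S (m - i)) {m : ℕ} (hm : m ≠ 0) :
    S m = -∑ j, α j ^ m := by
  induction m using Nat.strong_induction_on with
  | _ m ih =>
    obtain ⟨k, rfl⟩ := Nat.exists_eq_add_one_of_ne_zero hm
    have heq := (hrec (k + 1)).symm.trans (natCast_mul_neg_one_pow_mul_esymm α hc (k + 1))
    rw [Finset.sum_range_succ', Finset.sum_range_succ',
      Finset.sum_congr rfl fun i hi => by
        rw [ih (k + 1 - (i + 1)) (by omega) (by have := Finset.mem_range.1 hi; omega)]] at heq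
    simpa [hc₀] using heq

theorem norm_le_mul_sqrt_of_newton {c S : ℕ → ℂ} {N : ℕ} (hc₀ : c 0 = 1) (hc : ∀ m > N, c m = 0)
    (hrec : ∀ m : ℕ, m * c m = ∑ i ∈ Finset.range m, c i * S (m - i)) {Q : ℝ} (hQ : 0 < Q) {C : ℝ}
    {r₀ : ℕ} (hS : ∀ r ≥ r₀, ‖S (2 * r)‖ ≤ C * Q ^ r) : ‖S 1‖ ≤ N * √Q := by
  obtain ⟨α, hα⟩ := exists_eq_neg_one_pow_mul_esymm hc₀ hc
  have hSα {m : ℕ} (hm : m ≠ 0) : S m = -∑ j, α j ^ m := eq_neg_sum_pow_of_newton hc₀ hα hrec hm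
  have hbound : ∀ r ≥ r₀ + 1, ‖∑ i, (α i ^ 2 / (Q : ℂ)) ^ r‖ ≤ C := by
    intro r hr
    have hSr := hS r (by omega)
    rw [hSα (by omega), norm_neg] at hSr
    simp only [div_pow, ← pow_mul, ← Finset.sum_div]
    rwa [norm_div, norm_pow, Complex.norm_real, Real.norm_of_nonneg hQ.le,
      div_le_iff₀ (by positivity)]
  have hα_le (i : Fin N) : ‖α i‖ ≤ √Q := by
    have hle := norm_le_one_of_norm_sum_pow_le hbound i
    rw [norm_div, norm_pow, Complex.norm_real, Real.norm_of_nonneg hQ.le, div_le_one hQ] at hle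
    exact Real.le_sqrt_of_sq_le hle
  calc ‖S 1‖ = ‖∑ j, α j‖ := by rw [hSα one_ne_zero, norm_neg]; simp only [pow_one]
    _ ≤ ∑ _j : Fin N, √Q := norm_sum_le_of_le _ fun j _ => hα_le j
    _ = N * √Q := by simp

end PowerSums

section MonicSum

open Polynomial

variable {E : Type*} [Field E] [Finite E]

lemma finite_setOf_monic_natDegree_eq (E : Type*) [Field E] [Finite E] (m : ℕ) :
    {h : E[X] | h.Monic ∧ h.natDegree = m}.Finite := by
  have : Finite (degreeLT E (m + 1)) := Module.finite_of_finite E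
  refine (Set.toFinite (degreeLT E (m + 1) : Set E[X])).subset fun h hh => ?_
  rw [SetLike.mem_coe, mem_degreeLT]
  exact degree_le_natDegree.trans_lt (by exact_mod_cast hh.2.trans_lt m.lt_succ_self)

/-- The finite set of monic polynomials of degree `m` over a finite field. -/
noncomputable def monics (E : Type*) [Field E] [Finite E] (m : ℕ) : Finset E[X] :=
  (finite_setOf_monic_natDegree_eq E m).toFinset

lemma mem_monics {m : ℕ} {h : E[X]} : h ∈ monics E m ↔ h.Monic ∧ h.natDegree = m := by
  simp [monics]

lemma add_mem_monics {m : ℕ} {h g : E[X]} (hh : h ∈ monics E m) (hg : g.natDegree < m) :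
    h + g ∈ monics E m := by
  obtain ⟨hmonic, rfl⟩ := mem_monics.1 hh
  exact mem_monics.2 ⟨hmonic.add_of_left (degree_lt_degree hg),
    natDegree_add_eq_left_of_natDegree_lt hg⟩

variable {R : Type*} [CommRing R]

/-- The `m`-th coefficient `∑ ℓ h`, over monic `h` of degree `m`, of the Dirichlet series of `ℓ`,
written as a power series in `T = |E|⁻ˢ`. -/
noncomputable def monicSum (ℓ : E[X] → R) (m : ℕ) : R :=
  ∑ h ∈ monics E m, ℓ h

lemma monicSum_zero (ℓ : E[X] → R) : monicSum ℓ 0 = ℓ 1 := by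
  have hmonics : monics E 0 = {1} := by
    ext h
    rw [mem_monics, Finset.mem_singleton]
    exact ⟨fun hh => hh.1.natDegree_eq_zero.1 hh.2, by rintro rfl; simp⟩
  rw [monicSum, hmonics, Finset.sum_singleton]

lemma monicSum_eq_zero_of_injective_map [NoZeroDivisors R] {ℓ : E[X] → R} {m : ℕ}
    {T : E[X] → E[X]} (hT : ∀ h ∈ monics E m, T h ∈ monics E m) (hinj : T.Injective) {w : R}
    (hw : w ≠ 1) (hℓ : ∀ h ∈ monics E m, ℓ (T h) = w * ℓ h) : monicSum ℓ m = 0 := by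
  have hmap : ∑ h ∈ monics E m, ℓ (T h) = monicSum ℓ m :=
    Finset.sum_nbij T hT hinj.injOn
      (Finset.surjOn_of_injOn_of_card_le T hT hinj.injOn le_rfl) fun _ _ => rfl
  rw [Finset.sum_congr rfl hℓ, ← Finset.mul_sum] at hmap
  have hzero : (w - 1) * monicSum ℓ m = 0 := by rw [sub_mul, one_mul, sub_eq_zero]; exact hmap
  exact (mul_eq_zero.1 hzero).resolve_left (sub_ne_zero.2 hw)

open scoped Classical in
lemma sum_filter_dvd_eq_mul_monicSum {ℓ : E[X] → R}
    (hmul : ∀ g h : E[X], g.Monic → h.Monic → ℓ (g * h) = ℓ g * ℓ h) {i k : ℕ} {P : E[X]}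
    (hP : P ∈ monics E k) :
    ∑ h ∈ monics E (k + i) with P ∣ h, ℓ h = ℓ P * monicSum ℓ i := by
  obtain ⟨hPmonic, hPdeg⟩ := mem_monics.1 hP
  rw [monicSum, Finset.mul_sum]
  refine (Finset.sum_bij (fun g _ => P * g) (fun g hg => ?_)
    (fun g _ g' _ h => mul_left_cancel₀ hPmonic.ne_zero h) (fun h hh => ?_) fun g hg =>
      (hmul P g hPmonic (mem_monics.1 hg).1).symm).symm
  · obtain ⟨hgmonic, hgdeg⟩ := mem_monics.1 hg
    exact Finset.mem_filter.2 ⟨mem_monics.2 ⟨hPmonic.mul hgmonic,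
      by rw [hPmonic.natDegree_mul hgmonic, hPdeg, hgdeg]⟩, dvd_mul_right _ _⟩
  · obtain ⟨hmem, g, rfl⟩ := Finset.mem_filter.1 hh
    obtain ⟨hmonic, hdeg⟩ := mem_monics.1 hmem
    have hg : g.Monic := hPmonic.of_mul_monic_left hmonic
    rw [hPmonic.natDegree_mul hg, hPdeg, Nat.add_left_cancel_iff] at hdeg
    exact ⟨g, mem_monics.2 ⟨hg, hdeg⟩, rfl⟩

end MonicSum

section RelCharpoly

open Polynomial UniqueFactorizationMonoid

lemma pow_dvd_iff_le_count_normalizedFactors {M : Type*} [CommMonoidWithZero M]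
    [NormalizationMonoid M] [UniqueFactorizationMonoid M] [DecidableEq M] {p a : M} (ha : a ≠ 0)
    (hp : p ∈ normalizedFactors a) (i : ℕ) : p ^ i ∣ a ↔ i ≤ (normalizedFactors a).count p := by
  rw [pow_dvd_iff_le_emultiplicity,
    emultiplicity_eq_count_normalizedFactors (irreducible_of_normalized_factor p hp) ha,
    normalize_normalized_factor p hp]
  exact Nat.cast_le

/-- The characteristic polynomial of multiplication by `α` on `K / E`, as the power of the minimal
polynomial of `α` that has degree `[K : E]`. -/
noncomputable def relCharpoly (E : Type*) {K : Type*} [Field E] [Field K] [Algebra E K] (α : K) :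
    E[X] :=
  minpoly E α ^ (Module.finrank E K / (minpoly E α).natDegree)

variable {E K : Type*} [Field E] [Field K] [Algebra E K]

lemma minpoly_dvd_relCharpoly [FiniteDimensional E K] (α : K) : minpoly E α ∣ relCharpoly E α := by
  have hα : IsIntegral E α := Algebra.IsIntegral.isIntegral α
  exact dvd_pow_self _ (Nat.div_pos (Nat.le_of_dvd Module.finrank_pos (minpoly.degree_dvd hα))
    (minpoly.natDegree_pos hα)).ne'

lemma relCharpoly_mem_monics [Finite E] [FiniteDimensional E K] (α : K) :
    relCharpoly E α ∈ monics E (Module.finrank E K) := by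
  have hα : IsIntegral E α := Algebra.IsIntegral.isIntegral α
  refine mem_monics.2 ⟨(minpoly.monic hα).pow _, ?_⟩
  rw [relCharpoly, natDegree_pow, Nat.div_mul_cancel (minpoly.degree_dvd hα)]

variable [Finite E] [Fintype K]

open scoped Classical in
lemma card_minpoly_eq {P : E[X]} (hP : Irreducible P) (hmonic : P.Monic) :
    Finset.card {α : K | minpoly E α = P} =
      if P.natDegree ∣ Module.finrank E K then P.natDegree else 0 := by
  have : Fintype E := Fintype.ofFinite E
  split_ifs with hdvd
  · have hPdvd := (hP.natDegree_dvd_iff_dvd_X_pow_card_pow_sub_X (n := Module.finrank E K)).1 hdvd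
    rw [← Module.natCard_eq_pow_finrank, Nat.card_eq_fintype_card] at hPdvd
    have := FiniteField.isSplittingField_sub K E
    have hsplits : (P.map (algebraMap E K)).Splits := by
      refine (IsSplittingField.splits K (X ^ Fintype.card K - X : E[X])).of_dvd ?_
        (Polynomial.map_dvd _ hPdvd)
      simpa using FiniteField.X_pow_card_sub_X_ne_zero K (Fintype.one_lt_card (α := K))
    rw [← card_rootSet_eq_natDegree (PerfectField.separable_of_irreducible hP) hsplits,
      ← Set.toFinset_card]
    congr 1
    ext α
    simp only [Finset.mem_filter, Finset.mem_univ, true_and, Set.mem_toFinset, mem_rootSet]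
    constructor
    · rintro rfl
      exact ⟨hmonic.ne_zero, minpoly.aeval _ _⟩
    · exact fun hα => (minpoly.eq_of_irreducible_of_monic hP hα.2 hmonic).symm
  · rw [Finset.card_eq_zero, Finset.filter_eq_empty_iff]
    rintro α - rfl
    exact hdvd (minpoly.degree_dvd (Algebra.IsIntegral.isIntegral α))

open scoped Classical in
lemma card_relCharpoly_dvd {h : E[X]} (hh : h ≠ 0) :
    Finset.card {α : K | relCharpoly E α ∣ h} =
      ∑ P ∈ (normalizedFactors h).toFinset,
        if P.natDegree ∣ Module.finrank E K ∧
          Module.finrank E K / P.natDegree ≤ (normalizedFactors h).count P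
        then P.natDegree else 0 := by
  have hmaps : ∀ α ∈ ({α : K | relCharpoly E α ∣ h} : Finset K),
      minpoly E α ∈ (normalizedFactors h).toFinset := by
    intro α hα
    have hint : IsIntegral E α := Algebra.IsIntegral.isIntegral α
    rw [Multiset.mem_toFinset, mem_normalizedFactors_iff' hh]
    exact ⟨minpoly.irreducible hint, (minpoly.monic hint).normalize_eq_self,
      (minpoly_dvd_relCharpoly α).trans (by simpa using hα)⟩
  rw [Finset.card_eq_sum_card_fiberwise hmaps]
  refine Finset.sum_congr rfl fun P hP => ?_
  rw [Multiset.mem_toFinset] at hP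
  obtain ⟨hirr, hnorm, -⟩ := (mem_normalizedFactors_iff' hh).1 hP
  have hdvd : ∀ α : K, (relCharpoly E α ∣ h ∧ minpoly E α = P) ↔
      (minpoly E α = P ∧
        Module.finrank E K / P.natDegree ≤ (normalizedFactors h).count P) := by
    intro α
    rw [and_comm, and_congr_right_iff]
    rintro rfl
    exact pow_dvd_iff_le_count_normalizedFactors hh hP _
  rw [Finset.filter_filter, Finset.filter_congr fun α _ => hdvd α]
  by_cases hcount : Module.finrank E K / P.natDegree ≤ (normalizedFactors h).count P
  · simp only [hcount, and_true]
    exact card_minpoly_eq hirr (hnorm ▸ monic_normalize hirr.ne_zero)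
  · simp [hcount]

lemma card_filter_dvd_succ_and_div_le {e ν m : ℕ} (he : 0 < e) (hm : e * ν ≤ m) :
    Finset.card {k ∈ Finset.range m | e ∣ k + 1 ∧ (k + 1) / e ≤ ν} = ν := by
  have hfilter : {k ∈ Finset.range m | e ∣ k + 1 ∧ (k + 1) / e ≤ ν} =
      {k ∈ Finset.range (e * ν) | e ∣ k + 1} := by
    ext k
    simp only [Finset.mem_filter, Finset.mem_range]
    constructor
    · rintro ⟨-, ⟨c, hc⟩, hle⟩
      rw [hc, Nat.mul_div_cancel_left c he] at hle
      exact ⟨hc.trans_le (Nat.mul_le_mul_left e hle), c, hc⟩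
    · exact fun ⟨hlt, hdvd⟩ => ⟨hlt.trans_le hm, hdvd, Nat.div_le_of_le_mul hlt⟩
  rw [hfilter, Nat.card_multiples, Nat.mul_div_cancel_left ν he]

section Tower

variable {E : Type*} [Field E] [Finite E] {K : ℕ → Type*} [∀ k, Field (K k)]
  [∀ k, Fintype (K k)] [∀ k, Algebra E (K k)]

open scoped Classical in
lemma sum_card_relCharpoly_dvd (hK : ∀ k, Module.finrank E (K k) = k + 1) {h : E[X]}
    (hh : h.Monic) :
    ∑ k ∈ Finset.range h.natDegree, Finset.card {α : K k | relCharpoly E α ∣ h} =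
      h.natDegree := by
  have hfactor : ∀ P ∈ (normalizedFactors h).toFinset,
      (∑ k ∈ Finset.range h.natDegree,
        if P.natDegree ∣ k + 1 ∧ (k + 1) / P.natDegree ≤ (normalizedFactors h).count P
        then P.natDegree else 0) = (normalizedFactors h).count P • P.natDegree := by
    intro P hP
    rw [Multiset.mem_toFinset] at hP
    have hle := natDegree_le_of_dvd
      ((pow_dvd_iff_le_count_normalizedFactors hh.ne_zero hP _).2 le_rfl) hh.ne_zero
    rw [natDegree_pow, mul_comm] at hle
    rw [← Finset.sum_filter, Finset.sum_const, card_filter_dvd_succ_and_div_le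
      (irreducible_of_normalized_factor P hP).natDegree_pos hle]
  simp_rw [card_relCharpoly_dvd hh.ne_zero, hK]
  rw [Finset.sum_comm, Finset.sum_congr rfl hfactor, ← Finset.sum_multiset_map_count,
    ← natDegree_multiset_prod _ (zero_notMem_normalizedFactors _),
    prod_normalizedFactors_eq hh.ne_zero, hh.normalize_eq_self]

/-- The recursion equivalent to `L'/L = ∑ Sₖ Tᵏ⁻¹` for the `L`-function of a completely
multiplicative `ℓ`. -/
theorem natCast_mul_monicSum {R : Type*} [CommRing R]
    (hK : ∀ k, Module.finrank E (K k) = k + 1) {ℓ : E[X] → R}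
    (hmul : ∀ g h : E[X], g.Monic → h.Monic → ℓ (g * h) = ℓ g * ℓ h) (m : ℕ) :
    (m : R) * monicSum ℓ m =
      ∑ i ∈ Finset.range m, monicSum ℓ i * ∑ α : K (m - i - 1), ℓ (relCharpoly E α) := by
  classical
  have hcount : (m : R) * monicSum ℓ m = ∑ h ∈ monics E m, ∑ k ∈ Finset.range m, ∑ α : K k,
      if relCharpoly E α ∣ h then ℓ h else 0 := by
    rw [monicSum, Finset.mul_sum]
    refine Finset.sum_congr rfl fun h hh => ?_
    obtain ⟨hmonic, rfl⟩ := mem_monics.1 hh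
    conv_lhs => rw [← sum_card_relCharpoly_dvd hK hmonic]
    simp only [Nat.cast_sum, Finset.sum_mul, ← Finset.sum_filter, Finset.sum_const, nsmul_eq_mul]
  rw [hcount, Finset.sum_comm, ← Finset.sum_range_reflect]
  refine Finset.sum_congr rfl fun i hi => ?_
  rw [Finset.mem_range] at hi
  rw [Finset.sum_comm, Finset.mul_sum, Nat.sub_right_comm]
  refine Finset.sum_congr rfl fun α _ => ?_
  have hα := relCharpoly_mem_monics (E := E) α
  rw [hK] at hα
  rw [← Finset.sum_filter, mul_comm, ← sum_filter_dvd_eq_mul_monicSum hmul hα,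
    show m - i - 1 + 1 + i = m by omega]

end Tower

end RelCharpoly

section LocalFactor

open Polynomial

section Galois

variable {E K : Type*} [Field E] [Field K] [Algebra E K] [FiniteDimensional E K] [IsGalois E K]

lemma map_relCharpoly (α : K) :
    (relCharpoly E α).map (algebraMap E K) = ∏ σ : Gal(K/E), (X - C (σ α)) := by
  have hint : IsIntegral E α := Algebra.IsIntegral.isIntegral α
  have : Algebra.IsInvariant E K Gal(K/E) :=
    ⟨fun x hx => (IsGalois.mem_range_algebraMap_iff_fixed x).2 hx⟩
  obtain ⟨h, hmap, hdeg, hmonic⟩ := lifts_and_natDegree_eq_and_monic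
    (Algebra.IsInvariant.charpoly_mem_lifts E K Gal(K/E) α) (MulSemiringAction.monic_charpoly _ α)
  have hprod : h.map (algebraMap E K) = ∏ σ : Gal(K/E), (X - C (σ α)) := hmap
  have hdvd : h ∣ minpoly E α ^ Fintype.card Gal(K/E) := by
    rw [← map_dvd_map' (algebraMap E K), hprod, Polynomial.map_pow, ← Finset.card_univ,
      ← Finset.prod_const]
    refine Finset.prod_dvd_prod_of_dvd _ _ fun σ _ => ?_
    rw [dvd_iff_isRoot, IsRoot, eval_map_algebraMap]
    exact (isConjRoot_of_algEquiv α σ).aeval_eq_zero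
  obtain ⟨i, -, hassoc⟩ := (dvd_prime_pow (minpoly.prime hint) _).1 hdvd
  have hpow : h = minpoly E α ^ i :=
    eq_of_monic_of_associated hmonic ((minpoly.monic hint).pow i) hassoc
  have hfinrank : Module.finrank E K = i * (minpoly E α).natDegree := by
    rw [← natDegree_pow, ← hpow, hdeg, MulSemiringAction.charpoly_eq,
      natDegree_prod_of_monic _ _ fun σ _ => monic_X_sub_C _]
    simp [← Nat.card_eq_fintype_card, IsGalois.card_aut_eq_finrank]
  rw [relCharpoly, hfinrank, Nat.mul_div_cancel _ (minpoly.natDegree_pos hint), ← hpow, hprod]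

lemma natDegree_relCharpoly (α : K) : (relCharpoly E α).natDegree = Fintype.card Gal(K/E) := by
  rw [← natDegree_map (algebraMap E K), map_relCharpoly,
    natDegree_prod_of_monic _ _ fun σ _ => monic_X_sub_C _]
  simp

lemma neg_one_pow_mul_coeff_zero_relCharpoly (α : K) :
    (-1) ^ (relCharpoly E α).natDegree * (relCharpoly E α).coeff 0 = Algebra.norm E α := by
  apply (algebraMap E K).injective
  rw [map_mul, ← coeff_map, map_relCharpoly, natDegree_relCharpoly, coeff_zero_eq_eval_zero,
    eval_prod, Algebra.norm_eq_prod_automorphisms]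
  simp only [eval_sub, eval_X, eval_C, zero_sub, map_pow, map_neg, map_one]
  rw [Finset.prod_neg, Finset.card_univ, ← mul_assoc, ← mul_pow, neg_mul_neg, one_mul, one_pow,
    one_mul]

lemma nextCoeff_relCharpoly (α : K) :
    (relCharpoly E α).nextCoeff = -Algebra.trace E K α := by
  apply (algebraMap E K).injective
  rw [← nextCoeff_map (algebraMap E K).injective, map_relCharpoly, prod_X_sub_C_nextCoeff,
    map_neg, trace_eq_sum_automorphisms]

lemma coeff_one_div_coeff_zero_prod_X_sub_C {ι : Type*} (s : Finset ι) {a : ι → K}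
    (ha : ∀ i ∈ s, a i ≠ 0) :
    (∏ i ∈ s, (X - C (a i))).coeff 1 / (∏ i ∈ s, (X - C (a i))).coeff 0 = -∑ i ∈ s, (a i)⁻¹ := by
  classical
  induction s using Finset.induction_on with
  | empty => simp [coeff_one]
  | insert i s hi ih =>
    have ha' : ∀ j ∈ s, a j ≠ 0 := fun j hj => ha j (Finset.mem_insert_of_mem hj)
    have hi₀ : a i ≠ 0 := ha i (Finset.mem_insert_self _ _)
    have hs₀ : (∏ i ∈ s, (X - C (a i))).coeff 0 ≠ 0 := by
      simpa [coeff_zero_eq_eval_zero, eval_prod, Finset.prod_eq_zero_iff] using ha'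
    rw [Finset.prod_insert hi, Finset.sum_insert hi, mul_coeff_zero, mul_coeff_one, neg_add,
      ← ih ha']
    simp only [coeff_sub, coeff_X_zero, coeff_C_zero, coeff_X_one, coeff_C_succ]
    field_simp
    ring

lemma coeff_one_div_coeff_zero_relCharpoly {α : K} (hα : α ≠ 0) :
    (relCharpoly E α).coeff 1 / (relCharpoly E α).coeff 0 = -Algebra.trace E K α⁻¹ := by
  apply (algebraMap E K).injective
  rw [map_div₀, ← coeff_map, ← coeff_map, map_relCharpoly,
    coeff_one_div_coeff_zero_prod_X_sub_C _ fun σ _ => by simpa using hα, map_neg,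
    trace_eq_sum_automorphisms]
  simp only [map_inv₀]

lemma resultant_relCharpoly (α : K) (g : E[X]) {d : ℕ} (hg : g.natDegree ≤ d) :
    (relCharpoly E α).resultant g (relCharpoly E α).natDegree d =
      Algebra.norm E (aeval α g) := by
  apply (algebraMap E K).injective
  rw [← resultant_map_map, ← natDegree_map (algebraMap E K), map_relCharpoly,
    resultant_prod_left _ _ _ _ (by simp) (natDegree_map_le.trans hg),
    Algebra.norm_eq_prod_automorphisms]
  refine Finset.prod_congr rfl fun σ _ => ?_
  rw [natDegree_X_sub_C, resultant_X_sub_C_left _ _ _ (natDegree_map_le.trans hg),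
    eval_map_algebraMap, aeval_algHom_apply σ]

end Galois

/-- The completely multiplicative function on monic polynomials over `E` whose value at the
characteristic polynomial of `α` is `χ (N (α + α⁻¹)) * ψ (Tr (u * α + v * α⁻¹))`. In terms of the
roots `αᵢ` of `h`, the resultant is `∏ (αᵢ ^ 2 + 1)`, `(-1) ^ deg h * h.coeff 0` is `∏ αᵢ`,
`-h.nextCoeff` is `∑ αᵢ` and `-(h.coeff 1 / h.coeff 0)` is `∑ αᵢ⁻¹`. -/
noncomputable def localFactor {E : Type*} [Field E] (χ : MulChar E ℂ) (ψ : AddChar E ℂ) (u v : E)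
    (h : E[X]) : ℂ :=
  χ (h.resultant (X ^ 2 + 1) h.natDegree 2 * ((-1) ^ h.natDegree * h.coeff 0)⁻¹) *
    ψ (-(u * h.nextCoeff + v * (h.coeff 1 / h.coeff 0)))

section

variable {E : Type*} [Field E] (χ : MulChar E ℂ) (ψ : AddChar E ℂ) (u v : E)

lemma localFactor_one : localFactor χ ψ u v 1 = 1 := by
  simp [localFactor, coeff_one, nextCoeff]

variable {χ ψ u v}

lemma localFactor_eq_zero {h : E[X]} (hh : h.coeff 0 = 0) : localFactor χ ψ u v h = 0 := by
  simp [localFactor, hh, MulChar.map_zero]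

lemma natDegree_X_sq_add_one_le : (X ^ 2 + 1 : E[X]).natDegree ≤ 2 := by
  compute_degree

lemma localFactor_mul {g h : E[X]} (hg : g.Monic) (hh : h.Monic) :
    localFactor χ ψ u v (g * h) = localFactor χ ψ u v g * localFactor χ ψ u v h := by
  by_cases hg₀ : g.coeff 0 = 0
  · rw [localFactor_eq_zero hg₀, localFactor_eq_zero (by simp [mul_coeff_zero, hg₀]), zero_mul]
  by_cases hh₀ : h.coeff 0 = 0
  · rw [localFactor_eq_zero hh₀, localFactor_eq_zero (by simp [mul_coeff_zero, hh₀]), mul_zero]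
  simp only [localFactor]
  rw [mul_mul_mul_comm (χ _), ← map_mul, ← AddChar.map_add_eq_mul, hg.natDegree_mul hh,
    hg.nextCoeff_mul hh, resultant_mul_left _ _ _ _ natDegree_X_sq_add_one_le, mul_coeff_zero,
    mul_coeff_one]
  congr 2
  · rw [pow_add]
    simp only [mul_inv]
    ring
  · field_simp
    ring

lemma localFactor_relCharpoly {K : Type*} [Field K] [Algebra E K] [FiniteDimensional E K]
    [IsGalois E K] (α : K) :
    localFactor χ ψ u v (relCharpoly E α) = χ (Algebra.norm E (α + α⁻¹)) *
      ψ (Algebra.trace E K (algebraMap E K u * α + algebraMap E K v * α⁻¹)) := by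
  rw [localFactor, neg_one_pow_mul_coeff_zero_relCharpoly,
    resultant_relCharpoly α _ natDegree_X_sq_add_one_le, ← Algebra.norm_inv, ← map_mul]
  by_cases hα : α = 0
  · simp [hα, Algebra.norm_zero, MulChar.map_zero]
  rw [nextCoeff_relCharpoly, coeff_one_div_coeff_zero_relCharpoly hα,
    ← Algebra.smul_def, ← Algebra.smul_def, map_add (Algebra.trace E K), map_smul, map_smul,
    smul_eq_mul, smul_eq_mul]
  congr 3
  · simp only [map_add, map_pow, aeval_X, map_one]
    field_simp
  · ring

section Vanishing

variable [Finite E] {k : ℕ}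

lemma add_X_sq_add_one_mul_mem_monics {h g : E[X]} (hh : h ∈ monics E (k + 3))
    (hg : g.natDegree ≤ k) : h + (X ^ 2 + 1) * g ∈ monics E (k + 3) := by
  refine add_mem_monics hh (natDegree_mul_le.trans_lt ?_)
  have := natDegree_X_sq_add_one_le (E := E)
  omega

lemma localFactor_of_mem_monics {h : E[X]} (hh : h ∈ monics E (k + 3)) :
    localFactor χ ψ u v h =
      χ (h.resultant (X ^ 2 + 1) (k + 3) 2 * ((-1) ^ (k + 3) * h.coeff 0)⁻¹) *
        ψ (-(u * h.coeff (k + 2) + v * (h.coeff 1 / h.coeff 0))) := by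
  obtain ⟨-, hdeg⟩ := mem_monics.1 hh
  rw [localFactor, nextCoeff_of_natDegree_pos (by omega), hdeg]
  rfl

lemma localFactor_add_X_sq_add_one_mul {h g : E[X]} (hh : h ∈ monics E (k + 3))
    (hg : g.natDegree ≤ k) :
    localFactor χ ψ u v (h + (X ^ 2 + 1) * g) =
      χ (h.resultant (X ^ 2 + 1) (k + 3) 2 * ((-1) ^ (k + 3) * (h.coeff 0 + g.coeff 0))⁻¹) *
        ψ (-(u * (h.coeff (k + 2) + g.coeff k) +
          v * ((h.coeff 1 + g.coeff 1) / (h.coeff 0 + g.coeff 0)))) := by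
  have hcoeff_top : g.coeff (k + 2) = 0 := coeff_eq_zero_of_natDegree_lt (by omega)
  rw [localFactor_of_mem_monics (add_X_sq_add_one_mul_mem_monics hh hg),
    resultant_add_mul_left _ _ _ _ _ (by omega) natDegree_X_sq_add_one_le]
  simp [add_mul, coeff_X_pow_mul', hcoeff_top]

lemma monicSum_localFactor_eq_zero_of_left_ne_zero (hψ : ψ ≠ 1) (hu : u ≠ 0) (hk : 2 ≤ k) :
    monicSum (localFactor χ ψ u v) (k + 3) = 0 := by
  obtain ⟨a, ha⟩ := AddChar.ne_one_iff.1 hψ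
  have hdeg : (C (-(a / u)) * X ^ k).natDegree ≤ k := natDegree_C_mul_X_pow_le _ _
  refine monicSum_eq_zero_of_injective_map (T := fun h => h + (X ^ 2 + 1) * (C (-(a / u)) * X ^ k))
    (fun h hh => add_X_sq_add_one_mul_mem_monics hh hdeg) (add_left_injective _) ha fun h hh => ?_
  rw [localFactor_add_X_sq_add_one_mul hh hdeg, localFactor_of_mem_monics hh, mul_left_comm,
    ← AddChar.map_add_eq_mul]
  simp only [coeff_C_mul_X_pow, show (0 : ℕ) ≠ k by omega, show 1 ≠ k by omega, if_false, if_true,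
    add_zero]
  congr 2
  field_simp
  ring

lemma monicSum_localFactor_eq_zero_of_right_ne_zero (hψ : ψ ≠ 1) (hv : v ≠ 0) (hk : 2 ≤ k) :
    monicSum (localFactor χ ψ u v) (k + 3) = 0 := by
  obtain ⟨a, ha⟩ := AddChar.ne_one_iff.1 hψ
  let shift (h : E[X]) : E[X] := C (-(a / v) * h.coeff 0) * X
  have hdeg (h : E[X]) : (shift h).natDegree ≤ k :=
    (natDegree_C_mul_le _ _).trans (natDegree_X_le.trans (by omega))
  have hinj : Function.Injective fun h : E[X] => h + (X ^ 2 + 1) * shift h := by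
    intro g h hgh
    have hcoeff : g.coeff 0 = h.coeff 0 := by simpa [shift] using congrArg (coeff · 0) hgh
    simpa [shift, hcoeff] using hgh
  refine monicSum_eq_zero_of_injective_map
    (fun h hh => add_X_sq_add_one_mul_mem_monics hh (hdeg h)) hinj ha fun h hh => ?_
  by_cases hh₀ : h.coeff 0 = 0
  · rw [localFactor_eq_zero hh₀, localFactor_eq_zero (by simp [shift, hh₀]), mul_zero]
  rw [localFactor_add_X_sq_add_one_mul hh (hdeg h), localFactor_of_mem_monics hh, mul_left_comm,
    ← AddChar.map_add_eq_mul]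
  simp only [shift, coeff_C_mul, coeff_X_zero, coeff_X_one, coeff_X_of_ne_one (by omega : k ≠ 1),
    mul_zero, mul_one, add_zero]
  congr 2
  field_simp
  ring

lemma monicSum_localFactor_zero_zero (hχ : χ ≠ 1) :
    monicSum (localFactor χ ψ 0 0) (k + 3) = 0 := by
  obtain ⟨b, hb⟩ := MulChar.ne_one_iff.1 hχ
  let shift (h : E[X]) : E[X] := C (((b : E)⁻¹ - 1) * h.coeff 0)
  have hdeg (h : E[X]) : (shift h).natDegree ≤ k := (natDegree_C _).trans_le k.zero_le
  have hcoeff (h : E[X]) : h.coeff 0 + (shift h).coeff 0 = (b : E)⁻¹ * h.coeff 0 := by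
    simp only [shift, coeff_C_zero]
    ring
  have hinj : Function.Injective fun h : E[X] => h + (X ^ 2 + 1) * shift h := by
    intro g h hgh
    have hmul : (b : E)⁻¹ * g.coeff 0 = (b : E)⁻¹ * h.coeff 0 := by
      simpa [← hcoeff] using congrArg (coeff · 0) hgh
    simpa [shift, mul_left_cancel₀ (inv_ne_zero b.ne_zero) hmul] using hgh
  refine monicSum_eq_zero_of_injective_map
    (fun h hh => add_X_sq_add_one_mul_mem_monics hh (hdeg h)) hinj hb fun h hh => ?_
  rw [localFactor_add_X_sq_add_one_mul hh (hdeg h), localFactor_of_mem_monics hh, hcoeff,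
    ← mul_assoc (χ _), ← map_mul]
  congr 2
  · simp only [mul_inv, inv_inv]
    ring
  · simp

lemma monicSum_localFactor_eq_zero (hψ : ψ ≠ 1) (huv : χ ≠ 1 ∨ u ≠ 0 ∨ v ≠ 0) {m : ℕ}
    (hm : 4 < m) : monicSum (localFactor χ ψ u v) m = 0 := by
  obtain ⟨k, rfl⟩ : ∃ k, m = k + 3 := ⟨m - 3, by omega⟩
  by_cases hu : u = 0
  · by_cases hv : v = 0
    · subst hu hv
      exact monicSum_localFactor_zero_zero (by simpa using huv)
    · exact monicSum_localFactor_eq_zero_of_right_ne_zero hψ hv (by omega)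
  · exact monicSum_localFactor_eq_zero_of_left_ne_zero hψ hu (by omega)

end Vanishing

end

end LocalFactor

section WeilBound

variable {E : Type*} [Field E]

lemma liftedSum_eq_of_algEquiv {K L : Type*} [Field K] [Fintype K] [Algebra E K] [Field L]
    [Fintype L] [Algebra E L] (e : K ≃ₐ[E] L) (χ : MulChar E ℂ) (ψ : AddChar E ℂ) (u v : E) :
    liftedSum L χ ψ u v = liftedSum K χ ψ u v := by
  rw [liftedSum, liftedSum, ← e.bijective.sum_comp]
  refine Finset.sum_congr rfl fun x _ => ?_
  have hnorm : Algebra.norm E (e x + (e x)⁻¹) = Algebra.norm E (x + x⁻¹) := by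
    rw [← map_inv₀ e, ← map_add, Algebra.norm_eq_of_algEquiv]
  have htrace : Algebra.trace E L (algebraMap E L u * e x + algebraMap E L v * (e x)⁻¹) =
      Algebra.trace E K (algebraMap E K u * x + algebraMap E K v * x⁻¹) := by
    rw [← map_inv₀ e, ← e.commutes, ← e.commutes, ← map_mul, ← map_mul, ← map_add,
      Algebra.trace_eq_of_algEquiv]
  rw [hnorm, htrace]

variable [Fintype E]

lemma liftedSum_self (χ : MulChar E ℂ) (ψ : AddChar E ℂ) (u v : E) :
    liftedSum E χ ψ u v = ∑ x : E, χ (x + x⁻¹) * ψ (u * x + v * x⁻¹) := by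
  simp [liftedSum, Algebra.norm_self, Algebra.trace_self]

theorem norm_sum_add_inv_le {χ : MulChar E ℂ} {ψ : AddChar E ℂ} (hψ : ψ ≠ 1) {u v : E}
    (huv : χ ≠ 1 ∨ u ≠ 0 ∨ v ≠ 0) :
    ‖∑ x : E, χ (x + x⁻¹) * ψ (u * x + v * x⁻¹)‖ ≤ 4 * √(Fintype.card E) := by
  obtain ⟨p, _⟩ := CharP.exists E
  have : Fact p.Prime := ⟨CharP.char_is_prime E p⟩
  let K (k : ℕ) : Type := FiniteField.Extension E p (k + 1)
  have (k : ℕ) : Fintype (K k) := Fintype.ofFinite _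
  have hK (k : ℕ) : Module.finrank E (K k) = k + 1 := FiniteField.finrank_extension E p (k + 1)
  have hrec (m : ℕ) : m * monicSum (localFactor χ ψ u v) m =
      ∑ i ∈ Finset.range m,
        monicSum (localFactor χ ψ u v) i * liftedSum (K (m - i - 1)) χ ψ u v := by
    rw [natCast_mul_monicSum hK fun _ _ => localFactor_mul]
    simp only [localFactor_relCharpoly, liftedSum]
  have hS : ∀ r ≥ 2 * poleOrderBound (Fintype.card E) + 4,
      ‖liftedSum (K (2 * r - 1)) χ ψ u v‖ ≤
        (6 * poleOrderBound (Fintype.card E) + 9) * (Fintype.card E : ℝ) ^ r := by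
    intro r hr
    refine norm_liftedSum_le_of_even rfl (by rw [hK]; omega) ?_ hψ huv
    have := Nat.lt_pow_self (n := r) (Fintype.one_lt_card (α := E))
    omega
  have hbound := norm_le_mul_sqrt_of_newton (S := fun k => liftedSum (K (k - 1)) χ ψ u v)
    ((monicSum_zero _).trans (localFactor_one χ ψ u v))
    (fun m => monicSum_localFactor_eq_zero hψ huv) hrec (by simp [Fintype.card_pos]) hS
  have e : E ≃ₐ[E] K 0 := FiniteField.algEquivExtension E p 1 E (Module.finrank_self E)
  rwa [Nat.sub_self, liftedSum_eq_of_algEquiv e, liftedSum_self] at hbound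

end WeilBound

section PrimitiveElements

lemma exists_pow_eq_of_pow_eq_one {G : Type*} [Group G] [Finite G] [IsCyclic G] {l c : ℕ}
    (hcard : Nat.card G = l * c) {x : G} (hx : x ^ c = 1) : ∃ y, y ^ l = x := by
  obtain ⟨g, hg⟩ := IsCyclic.exists_generator (α := G)
  obtain ⟨k, rfl⟩ := mem_powers_iff_mem_zpowers.2 (hg x)
  have hc : 0 < c := Nat.pos_of_mul_pos_left (hcard ▸ Nat.card_pos)
  have hdvd : l * c ∣ k * c := by
    rw [← hcard, ← orderOf_eq_card_of_forall_mem_zpowers hg, orderOf_dvd_iff_pow_eq_one, pow_mul]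
    exact hx
  obtain ⟨j, rfl⟩ := Nat.dvd_of_mul_dvd_mul_right hc hdvd
  exact ⟨g ^ j, by rw [← pow_mul, mul_comm]⟩

lemma prod_ne_one_of_orderOf_eq_prime {M : Type*} [CommGroup M] {f : ℕ → M} {D : Finset ℕ}
    (hprime : ∀ l ∈ D, l.Prime) (hf : ∀ l ∈ D, orderOf (f l) = l) (hD : D.Nonempty) :
    ∏ l ∈ D, f l ≠ 1 := by
  intro hprod
  obtain ⟨l, hl⟩ := hD
  rw [← Finset.mul_prod_erase _ _ hl] at hprod
  have hrest : (∏ k ∈ D.erase l, f k) ^ ∏ k ∈ D.erase l, k = 1 := by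
    rw [← Finset.prod_pow]
    refine Finset.prod_eq_one fun k hk => ?_
    rw [← orderOf_dvd_iff_pow_eq_one, hf k (Finset.mem_of_mem_erase hk)]
    exact Finset.dvd_prod_of_mem _ hk
  have hpow : f l ^ ∏ k ∈ D.erase l, k = 1 := by
    rw [eq_inv_of_mul_eq_one_left hprod, inv_pow, hrest, inv_one]
  rw [← orderOf_dvd_iff_pow_eq_one, hf l hl, (hprime l hl).prime.dvd_finsetProd_iff] at hpow
  obtain ⟨k, hk, hlk⟩ := hpow
  have hkD := Finset.mem_of_mem_erase hk
  exact Finset.ne_of_mem_erase hk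
    ((Nat.prime_dvd_prime_iff_eq (hprime l hl) (hprime k hkD)).1 hlk).symm

variable {E : Type*} [Field E]

lemma prod_mulChar_apply (f : ℕ → MulChar E ℂ) (D : Finset ℕ) (t : E) :
    (∏ l ∈ D, f l) t = (1 : MulChar E ℂ) t * ∏ l ∈ D, f l t := by
  induction D using Finset.induction_on with
  | empty => simp
  | insert l D hl ih =>
    rw [Finset.prod_insert hl, Finset.prod_insert hl, MulChar.mul_apply, ih, mul_left_comm]

lemma sum_powerset_prod_mulChar_apply (f : ℕ → MulChar E ℂ) (P : Finset ℕ) (t : E) :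
    ∑ D ∈ P.powerset, (-1) ^ D.card * (∏ l ∈ D, f l) t =
      (1 : MulChar E ℂ) t * ∏ l ∈ P, (1 - f l t) := by
  simp only [sub_eq_add_neg, Finset.prod_one_add, Finset.mul_sum, prod_mulChar_apply,
    Finset.prod_neg, mul_left_comm]

lemma mulChar_apply_eq_one_of_pow_eq_one [Fintype E] {χ : MulChar E ℂ} {c : ℕ}
    (hcard : Fintype.card E - 1 = orderOf χ * c) {t : E} (ht : t ≠ 0) (htc : t ^ c = 1) :
    χ t = 1 := by
  classical
  have hunits : Nat.card Eˣ = orderOf χ * c := by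
    rw [Nat.card_eq_fintype_card, Fintype.card_units, hcard]
  obtain ⟨y, hy⟩ := exists_pow_eq_of_pow_eq_one hunits (x := Units.mk0 t ht) (by ext; simpa)
  calc χ t = χ ((y ^ orderOf χ : Eˣ) : E) := by rw [hy, Units.val_mk0]
    _ = (χ ^ orderOf χ) y := by rw [MulChar.pow_apply_coe, Units.val_pow_eq_pow_val, map_pow]
    _ = 1 := by rw [pow_orderOf_eq_one, MulChar.one_apply_coe]

lemma orderOf_eq_card_sub_one_of_mulChar_ne_one [Fintype E] {f : ℕ → MulChar E ℂ}
    (hf : ∀ l ∈ (Fintype.card E - 1).primeFactors, orderOf (f l) = l) {t : E} (ht : t ≠ 0)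
    (hne : ∀ l ∈ (Fintype.card E - 1).primeFactors, f l t ≠ 1) :
    orderOf t = Fintype.card E - 1 := by
  have hpos : 0 < Fintype.card E - 1 := Nat.sub_pos_of_lt Fintype.one_lt_card
  refine orderOf_eq_of_pow_and_pow_div_prime hpos (FiniteField.pow_card_sub_one_eq_one t ht) ?_
  intro l hl hdvd hpow
  have hmem : l ∈ (Fintype.card E - 1).primeFactors := Nat.mem_primeFactors.2 ⟨hl, hdvd, hpos.ne'⟩
  refine hne l hmem (mulChar_apply_eq_one_of_pow_eq_one ?_ ht hpow)
  rw [hf l hmem, Nat.mul_div_cancel' hdvd]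

lemma exists_mulChar_orderOf_eq_of_mem_primeFactors (E : Type*) [Field E] [Fintype E] :
    ∃ f : ℕ → MulChar E ℂ, ∀ l ∈ (Fintype.card E - 1).primeFactors, orderOf (f l) = l := by
  have hex : ∀ l ∈ (Fintype.card E - 1).primeFactors, ∃ χ : MulChar E ℂ, orderOf χ = l :=
    fun l hl => MulChar.exists_mulChar_orderOf E (Nat.dvd_of_mem_primeFactors hl)
      (Complex.isPrimitiveRoot_exp l (Nat.prime_of_mem_primeFactors hl).ne_zero)
  choose! f hf using hex
  exact ⟨f, hf⟩

end PrimitiveElements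

section PrescribedTraces

variable {F E : Type*} [Field F] [Field E] [Fintype E] [Algebra F E]

open Classical in
/-- The sum of `χ (x + x⁻¹)` over the `x` with `Tr x = a` and `Tr x⁻¹ = b`. For `χ = 1` it counts
such `x` with `x + x⁻¹ ≠ 0`. -/
noncomputable def traceCharSum (a b : F) (χ : MulChar E ℂ) : ℂ :=
  ∑ x : E, if Algebra.trace F E x = a ∧ Algebra.trace F E x⁻¹ = b then χ (x + x⁻¹) else 0

lemma exists_addChar_ne_one (K : Type*) [Field K] [Finite K] : ∃ ψ : AddChar K ℂ, ψ ≠ 1 := by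
  obtain ⟨ψ, hψ⟩ := (AddChar.exists_apply_ne_zero (α := K) (a := 1)).2 one_ne_zero
  exact ⟨ψ, AddChar.ne_one_iff.2 ⟨1, hψ⟩⟩

lemma sum_addChar_mul_eq_ite [Fintype F] [DecidableEq F] {ψ : AddChar F ℂ} (hψ : ψ ≠ 1)
    (s t a b : F) :
    ∑ w : F × F, ψ (w.1 * (s - a)) * ψ (w.2 * (t - b)) =
      if s = a ∧ t = b then (Fintype.card F : ℂ) ^ 2 else 0 := by
  have hprim := AddChar.IsPrimitive.of_ne_one hψ
  rw [Fintype.sum_prod_type]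
  simp only [← Finset.mul_sum, ← Finset.sum_mul, AddChar.sum_mulShift _ hprim, sub_eq_zero]
  by_cases hs : s = a <;> by_cases ht : t = b <;> simp [hs, ht, sq]

lemma card_sq_mul_traceCharSum [Fintype F] {ψ : AddChar F ℂ} (hψ : ψ ≠ 1) (a b : F)
    (χ : MulChar E ℂ) :
    (Fintype.card F : ℂ) ^ 2 * traceCharSum a b χ =
      ∑ w : F × F, ψ (-(w.1 * a + w.2 * b)) * ∑ x : E, χ (x + x⁻¹) *
        ψ (Algebra.trace F E (algebraMap F E w.1 * x + algebraMap F E w.2 * x⁻¹)) := by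
  classical
  have hshift (x : E) (w : F × F) : ψ (-(w.1 * a + w.2 * b)) * (χ (x + x⁻¹) *
      ψ (Algebra.trace F E (algebraMap F E w.1 * x + algebraMap F E w.2 * x⁻¹))) =
      χ (x + x⁻¹) * (ψ (w.1 * (Algebra.trace F E x - a)) *
        ψ (w.2 * (Algebra.trace F E x⁻¹ - b))) := by
    rw [mul_left_comm, ← AddChar.map_add_eq_mul, ← AddChar.map_add_eq_mul, ← Algebra.smul_def,
      ← Algebra.smul_def, map_add (Algebra.trace F E), map_smul, map_smul, smul_eq_mul,
      smul_eq_mul]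
    ring_nf
  simp only [Finset.mul_sum]
  rw [Finset.sum_comm, traceCharSum, Finset.mul_sum]
  refine Finset.sum_congr rfl fun x _ => ?_
  simp only [hshift]
  rw [← Finset.mul_sum, sum_addChar_mul_eq_ite hψ]
  split_ifs <;> simp [mul_comm]

lemma sum_powerset_traceCharSum_eq_zero {a b : F} {f : ℕ → MulChar E ℂ}
    (hf : ∀ l ∈ (Fintype.card E - 1).primeFactors, orderOf (f l) = l)
    (hnone : ∀ x : E, x ≠ 0 → Algebra.trace F E x = a → Algebra.trace F E x⁻¹ = b →
      orderOf (x + x⁻¹) ≠ Fintype.card E - 1) :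
    ∑ D ∈ (Fintype.card E - 1).primeFactors.powerset,
      (-1) ^ D.card * traceCharSum a b (∏ l ∈ D, f l) = 0 := by
  simp only [traceCharSum, Finset.mul_sum]
  rw [Finset.sum_comm]
  refine Finset.sum_eq_zero fun x _ => ?_
  split_ifs with hx
  · rw [sum_powerset_prod_mulChar_apply]
    by_contra hne
    obtain ⟨hone, hprod⟩ := mul_ne_zero_iff.1 hne
    have ht : x + x⁻¹ ≠ 0 := (MulChar.apply_ne_zero_iff.1 hone).ne_zero
    have hx₀ : x ≠ 0 := by
      rintro rfl
      simp at ht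
    refine hnone x hx₀ hx.1 hx.2 (orderOf_eq_card_sub_one_of_mulChar_ne_one hf ht fun l hl h => ?_)
    exact Finset.prod_ne_zero_iff.1 hprod l hl (by rw [h, sub_self])
  · simp

variable [Fintype F] (a b : F)

lemma norm_card_sq_mul_traceCharSum_sub_le (χ : MulChar E ℂ) :
    ‖(Fintype.card F : ℂ) ^ 2 * traceCharSum a b χ - ∑ x : E, χ (x + x⁻¹)‖ ≤
      ((Fintype.card F : ℝ) ^ 2 - 1) * (4 * √(Fintype.card E)) := by
  classical
  obtain ⟨ψ, hψ⟩ := exists_addChar_ne_one F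
  let Ψ : AddChar E ℂ := ψ.compAddMonoidHom (Algebra.trace F E).toAddMonoidHom
  have hΨ : Ψ ≠ 1 := by
    obtain ⟨s, hs⟩ := AddChar.ne_one_iff.1 hψ
    obtain ⟨y, rfl⟩ := Algebra.trace_surjective F E s
    exact AddChar.ne_one_iff.2 ⟨y, hs⟩
  rw [card_sq_mul_traceCharSum hψ, ← Finset.add_sum_erase _ _ (Finset.mem_univ (0 : F × F))]
  simp only [Prod.fst_zero, Prod.snd_zero, zero_mul, map_zero, add_zero, neg_zero,
    AddChar.map_zero_eq_one, mul_one, one_mul, add_sub_cancel_left]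
  have hcard : ((Finset.univ.erase (0 : F × F)).card : ℝ) = (Fintype.card F : ℝ) ^ 2 - 1 := by
    rw [Finset.card_erase_of_mem (Finset.mem_univ _), Finset.card_univ, Fintype.card_prod,
      Nat.cast_sub (Nat.mul_pos Fintype.card_pos Fintype.card_pos), Nat.cast_mul, sq, Nat.cast_one]
  rw [← hcard, ← nsmul_eq_mul]
  refine (norm_sum_le _ _).trans (Finset.sum_le_card_nsmul _ _ _ fun w hw => ?_)
  rw [norm_mul, AddChar.norm_apply, one_mul]
  refine norm_sum_add_inv_le hΨ (Or.inr ?_)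
  simpa [Prod.ext_iff, or_iff_not_imp_left] using Finset.ne_of_mem_erase hw

lemma norm_card_sq_mul_traceCharSum_le {χ : MulChar E ℂ} (hχ : χ ≠ 1) :
    ‖(Fintype.card F : ℂ) ^ 2 * traceCharSum a b χ‖ ≤
      (Fintype.card F : ℝ) ^ 2 * (4 * √(Fintype.card E)) := by
  obtain ⟨ψ, hψ⟩ := exists_addChar_ne_one E
  have hweil := norm_sum_add_inv_le hψ (u := 0) (v := 0) (Or.inl hχ)
  simp only [zero_mul, add_zero, AddChar.map_zero_eq_one, mul_one] at hweil
  have hdiff := norm_card_sq_mul_traceCharSum_sub_le a b χ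
  have htriangle :=
    norm_sub_norm_le ((Fintype.card F : ℂ) ^ 2 * traceCharSum a b χ) (∑ x : E, χ (x + x⁻¹))
  linarith

lemma sum_one_mulChar_add_inv [DecidableEq E] :
    ∑ x : E, (1 : MulChar E ℂ) (x + x⁻¹) =
      ((Finset.univ.filter fun x : E => x + x⁻¹ ≠ 0).card : ℂ) := by
  rw [Finset.card_filter, Nat.cast_sum]
  refine Finset.sum_congr rfl fun x _ => ?_
  by_cases hx : x + x⁻¹ = 0
  · simp [hx, MulChar.map_zero]
  · simp [hx, MulChar.one_apply (isUnit_iff_ne_zero.2 hx)]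

lemma le_norm_card_sq_mul_traceCharSum_one :
    (Fintype.card E : ℝ) - 3 - ((Fintype.card F : ℝ) ^ 2 - 1) * (4 * √(Fintype.card E)) ≤
      ‖(Fintype.card F : ℂ) ^ 2 * traceCharSum a b (1 : MulChar E ℂ)‖ := by
  classical
  have hdiff := norm_card_sq_mul_traceCharSum_sub_le a b (1 : MulChar E ℂ)
  have hcard : (Fintype.card E : ℝ) ≤ (Finset.univ.filter fun x : E => x + x⁻¹ ≠ 0).card + 3 :=
    mod_cast card_le_card_add_inv_ne_zero_add_three
  rw [norm_sub_rev, sum_one_mulChar_add_inv] at hdiff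
  have htriangle := (norm_sub_norm_le _ _).trans hdiff
  rw [Complex.norm_natCast] at htriangle
  linarith

lemma norm_card_sq_mul_traceCharSum_one_le {f : ℕ → MulChar E ℂ} {P : Finset ℕ}
    (hprime : ∀ l ∈ P, l.Prime) (hf : ∀ l ∈ P, orderOf (f l) = l)
    (hsum : ∑ D ∈ P.powerset, (-1) ^ D.card * traceCharSum a b (∏ l ∈ D, f l) = 0) :
    ‖(Fintype.card F : ℂ) ^ 2 * traceCharSum a b (1 : MulChar E ℂ)‖ ≤
      (2 ^ P.card - 1) * ((Fintype.card F : ℝ) ^ 2 * (4 * √(Fintype.card E))) := by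
  rw [← Finset.add_sum_erase _ _ (Finset.empty_mem_powerset P), Finset.card_empty, pow_zero,
    one_mul, Finset.prod_empty] at hsum
  rw [eq_neg_of_add_eq_zero_left hsum, mul_neg, norm_neg, Finset.mul_sum]
  have hcard : ((P.powerset.erase ∅).card : ℝ) = 2 ^ P.card - 1 := by
    rw [Finset.card_erase_of_mem (Finset.empty_mem_powerset P), Finset.card_powerset,
      Nat.cast_sub Nat.one_le_two_pow, Nat.cast_pow, Nat.cast_ofNat, Nat.cast_one]
  rw [← hcard, ← nsmul_eq_mul]
  refine (norm_sum_le _ _).trans (Finset.sum_le_card_nsmul _ _ _ fun D hD => ?_)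
  obtain ⟨hD₀, hDP⟩ := Finset.mem_erase.1 hD
  rw [Finset.mem_powerset] at hDP
  rw [mul_left_comm, norm_mul, norm_pow, norm_neg, norm_one, one_pow, one_mul]
  exact norm_card_sq_mul_traceCharSum_le a b (prod_ne_one_of_orderOf_eq_prime
    (fun l hl => hprime l (hDP hl)) (fun l hl => hf l (hDP hl))
    (Finset.nonempty_iff_ne_empty.2 hD₀))

theorem exists_trace_eq_trace_inv_eq_orderOf_add_inv_eq
    (hcard : 4 * (Fintype.card F : ℝ) ^ 2 * 2 ^ (Fintype.card E - 1).primeFactors.card <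
      √(Fintype.card E)) :
    ∃ ξ : E, ξ ≠ 0 ∧ Algebra.trace F E ξ = a ∧ Algebra.trace F E ξ⁻¹ = b ∧
      orderOf (ξ + ξ⁻¹) = Fintype.card E - 1 := by
  by_contra! hnone
  obtain ⟨f, hf⟩ := exists_mulChar_orderOf_eq_of_mem_primeFactors E
  have hupper := norm_card_sq_mul_traceCharSum_one_le a b
    (fun l => Nat.prime_of_mem_primeFactors) hf (sum_powerset_traceCharSum_eq_zero hf hnone)
  have hlower := (le_norm_card_sq_mul_traceCharSum_one (E := E) a b).trans hupper
  have hsqrt : √(Fintype.card E) ^ 2 = (Fintype.card E : ℝ) := Real.sq_sqrt (Nat.cast_nonneg _)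
  have hF : (1 : ℝ) ≤ Fintype.card F := mod_cast Fintype.card_pos
  have hW : (1 : ℝ) ≤ 2 ^ (Fintype.card E - 1).primeFactors.card := one_le_pow₀ one_le_two
  have hfour : 4 < √(Fintype.card E) := by
    nlinarith [one_le_mul_of_one_le_of_one_le (one_le_pow₀ (n := 2) hF) hW]
  nlinarith

end PrescribedTraces

lemma four_mul_sq_mul_lt_sqrt_pow {q : ℕ} (hq : 0 < q) {n k : ℕ}
    (h : (2 : ℝ) ^ (k + 2) < (q : ℝ) ^ ((n : ℝ) / 2 - 2)) :
    4 * (q : ℝ) ^ 2 * 2 ^ k < √((q ^ n : ℕ) : ℝ) := by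
  have hq₀ : (0 : ℝ) < q := mod_cast hq
  have hsqrt : (q : ℝ) ^ ((n : ℝ) / 2) = √((q ^ n : ℕ) : ℝ) := by
    rw [Nat.cast_pow, Real.sqrt_eq_rpow, ← Real.rpow_natCast, ← Real.rpow_mul hq₀.le,
      div_eq_mul_one_div]
  rw [Real.rpow_sub hq₀, hsqrt, Real.rpow_two, lt_div_iff₀ (by positivity)] at h
  calc 4 * (q : ℝ) ^ 2 * 2 ^ k = 2 ^ (k + 2) * (q : ℝ) ^ 2 := by ring
    _ < √((q ^ n : ℕ) : ℝ) := h

/-- If `q^(n/2 - 2) > 2^(ω(q^n - 1) + 2)` then for every `a, b ∈ F_q` there is a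
nonzero `ξ ∈ F_{q^n}` with `Tr ξ = a`, `Tr ξ⁻¹ = b` and `ξ + ξ⁻¹` primitive. -/
theorem stmt4 (q n : ℕ) (hq : IsPrimePow q) (hn : 0 < n)
    (hcond : (q : ℝ) ^ ((n : ℝ) / 2 - 2) > 2 ^ ((q ^ n - 1).primeFactors.card + 2))
    (F E : Type*) [Field F] [Fintype F] [Field E] [Fintype E] [Algebra F E]
    (hF : Fintype.card F = q) (hE : Fintype.card E = q ^ n) (a b : F) :
    ∃ ξ : E, ξ ≠ 0 ∧ Algebra.trace F E ξ = a ∧ Algebra.trace F E ξ⁻¹ = b ∧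
      orderOf (ξ + ξ⁻¹) = q ^ n - 1 := by
  rw [← hE]
  apply exists_trace_eq_trace_inv_eq_orderOf_add_inv_eq
  rw [hE, hF]
  exact four_mul_sq_mul_lt_sqrt_pow hq.pos hcond
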